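/- Consider the (α,β,γ)-metric F(x,y) = α·e^{β/α} + γ on U × (ℝⁿ∖{0}). Assume √(b²(x)) < 1 and √(g²(x)) < e^{−1} for all x ∈ U (so F > 0 and F is a Finsler metric with invertible fundamental tensor), and assume that the 1-form β is nowhere zero on U (i.e. (b_i(x)) ≠ 0 for every x). Let G^i be the spray coefficients of F. If (U,F) is a Douglas space, i.e. for every x ∈ U and all indices i,j the function y ↦ G^i(x,y)y^j − G^j(x,y)y^i on ℝⁿ∖{0} is the restriction of a homogeneous polynomial of degree three in y, then β is parallel with respect to α, i.e. b_{i|j} = 0 on U for all i,j, and γ is closed, i.e. ^γs_{ij} = 0 on U for all i,j (equivalently ∂γ_i/∂x^j = ∂γ_j/∂x^i). -/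

import Mathlib

noncomputable section

open Set

/-- `a^{ij} u_i v_j` : the pairing of two covectors via the inverse matrix. -/
def quadInv {n : ℕ} (a : Matrix (Fin n) (Fin n) ℝ) (u v : Fin n → ℝ) : ℝ :=
  ∑ i, ∑ j, a⁻¹ i j * u i * v j

/-- `α(y) = √(a_{ij} y^i y^j)`. -/
def alph {n : ℕ} (a : Matrix (Fin n) (Fin n) ℝ) (y : Fin n → ℝ) : ℝ :=
  Real.sqrt (∑ i, ∑ j, a i j * y i * y j)

/-- `v_i y^i`. -/
def oneForm {n : ℕ} (v y : Fin n → ℝ) : ℝ := ∑ i, v i * y i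

/-- `s(y) = v_i y^i / α(y)`. -/
def sVar {n : ℕ} (a : Matrix (Fin n) (Fin n) ℝ) (v y : Fin n → ℝ) : ℝ :=
  oneForm v y / alph a y

/-- The (α,β,γ)-metric `F(y) = α·Ψ(s, s̄)`. -/
def Fm {n : ℕ} (a : Matrix (Fin n) (Fin n) ℝ) (bv gv : Fin n → ℝ)
    (Ψ : ℝ → ℝ → ℝ) (y : Fin n → ℝ) : ℝ :=
  alph a y * Ψ (sVar a bv y) (sVar a gv y)

/-- Partial derivative of a function on `ℝⁿ` in the `i`-th coordinate direction. -/
def pd {n : ℕ} (f : (Fin n → ℝ) → ℝ) (y : Fin n → ℝ) (i : Fin n) : ℝ :=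
  fderiv ℝ f y (Pi.single i 1)

/-- Second partial derivative. -/
def pd2 {n : ℕ} (f : (Fin n → ℝ) → ℝ) (y : Fin n → ℝ) (i j : Fin n) : ℝ :=
  pd (fun z => pd f z j) y i

/-- Partial derivative with respect to the first slot (`∂/∂s`). -/
def Ds (Ψ : ℝ → ℝ → ℝ) : ℝ → ℝ → ℝ := fun p q => deriv (fun u => Ψ u q) p

/-- Partial derivative with respect to the second slot (`∂/∂s̄`). -/
def Dt (Ψ : ℝ → ℝ → ℝ) : ℝ → ℝ → ℝ := fun p q => deriv (fun v => Ψ p v) q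

/-- `h_i = v_i − s·α_i`. -/
def hl {n : ℕ} (a : Matrix (Fin n) (Fin n) ℝ) (v y : Fin n → ℝ) (i : Fin n) : ℝ :=
  v i - sVar a v y * pd (alph a) y i

/-- Fundamental tensor `g_{ij} = ½ ∂²(F²)/∂yⁱ∂yʲ`. -/
def fundT {n : ℕ} (F : (Fin n → ℝ) → ℝ) (y : Fin n → ℝ) (i j : Fin n) : ℝ :=
  (1 / 2) * pd2 (fun z => F z ^ 2) y i j

/-- `Π = Ψ − sΨ_s − s̄Ψ_s̄`. -/
def PiF (Ψ : ℝ → ℝ → ℝ) (p q : ℝ) : ℝ := Ψ p q - p * Ds Ψ p q - q * Dt Ψ p q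

/-- `J = (Ψ_ss Ψ_s̄s̄ − Ψ_ss̄²)/Π`. -/
def JF (Ψ : ℝ → ℝ → ℝ) (p q : ℝ) : ℝ :=
  (Ds (Ds Ψ) p q * Dt (Dt Ψ) p q - Dt (Ds Ψ) p q ^ 2) / PiF Ψ p q

/-- `Γ`, with `B = b²`, `G = g²`, `Θ = θ` as real parameters. -/
def GammaF (Ψ : ℝ → ℝ → ℝ) (B G Θ p q : ℝ) : ℝ :=
  PiF Ψ p q + (B - p ^ 2) * Ds (Ds Ψ) p q + (G - q ^ 2) * Dt (Dt Ψ) p q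
    + 2 * (Θ - p * q) * Dt (Ds Ψ) p q
    + ((B - p ^ 2) * (G - q ^ 2) - (Θ - p * q) ^ 2) * JF Ψ p q

/-- `ρ = Ψ(Ψ − sΨ_s − s̄Ψ_s̄)`. -/
def rhoF (Ψ : ℝ → ℝ → ℝ) : ℝ → ℝ → ℝ := fun p q => Ψ p q * PiF Ψ p q

/-- `ρ₀ = ΨΨ_ss + Ψ_s²`. -/
def rho0F (Ψ : ℝ → ℝ → ℝ) : ℝ → ℝ → ℝ := fun p q => Ψ p q * Ds (Ds Ψ) p q + Ds Ψ p q ^ 2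

/-- `ρ̄₀ = ΨΨ_s̄s̄ + Ψ_s̄²`. -/
def rhobar0F (Ψ : ℝ → ℝ → ℝ) : ℝ → ℝ → ℝ := fun p q => Ψ p q * Dt (Dt Ψ) p q + Dt Ψ p q ^ 2

/-- `ρ₃ = ΨΨ_ss̄ + Ψ_sΨ_s̄`. -/
def rho3F (Ψ : ℝ → ℝ → ℝ) : ℝ → ℝ → ℝ :=
  fun p q => Ψ p q * Dt (Ds Ψ) p q + Ds Ψ p q * Dt Ψ p q

/-- `ρ₁ = ΨΨ_s − sρ₀ − s̄ρ₃`. -/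
def rho1F (Ψ : ℝ → ℝ → ℝ) : ℝ → ℝ → ℝ :=
  fun p q => Ψ p q * Ds Ψ p q - p * rho0F Ψ p q - q * rho3F Ψ p q

/-- `ρ̄₁ = ΨΨ_s̄ − s̄ρ̄₀ − sρ₃`. -/
def rhobar1F (Ψ : ℝ → ℝ → ℝ) : ℝ → ℝ → ℝ :=
  fun p q => Ψ p q * Dt Ψ p q - q * rhobar0F Ψ p q - p * rho3F Ψ p q

/-- `ρ₂ = −sρ₁ − s̄ρ̄₁`. -/
def rho2F (Ψ : ℝ → ℝ → ℝ) : ℝ → ℝ → ℝ :=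
  fun p q => -p * rho1F Ψ p q - q * rhobar1F Ψ p q

/-- `π₁ = Ψ_s̄Ψ_ss̄ − Ψ_sΨ_s̄s̄ + sΨJ`. -/
def pi1F (Ψ : ℝ → ℝ → ℝ) (p q : ℝ) : ℝ :=
  Dt Ψ p q * Dt (Ds Ψ) p q - Ds Ψ p q * Dt (Dt Ψ) p q + p * Ψ p q * JF Ψ p q

/-- `π₂ = Ψ_sΨ_ss̄ − Ψ_s̄Ψ_ss + s̄ΨJ`. -/
def pi2F (Ψ : ℝ → ℝ → ℝ) (p q : ℝ) : ℝ :=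
  Ds Ψ p q * Dt (Ds Ψ) p q - Dt Ψ p q * Ds (Ds Ψ) p q + q * Ψ p q * JF Ψ p q


/-- Christoffel symbols `Γ^k_{ij}` of the Riemannian metric `a_{ij}(x)`. -/
def chr {n : ℕ} (a : (Fin n → ℝ) → Matrix (Fin n) (Fin n) ℝ) (x : Fin n → ℝ)
    (k i j : Fin n) : ℝ :=
  (1 / 2) * ∑ l, (a x)⁻¹ k l *
    (pd (fun z => a z j l) x i + pd (fun z => a z i l) x j - pd (fun z => a z i j) x l)

/-- Geodesic coefficients `^αG^i = ½ Γ^i_{jk} y^j y^k` of `α`. -/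
def alphaG {n : ℕ} (a : (Fin n → ℝ) → Matrix (Fin n) (Fin n) ℝ) (x y : Fin n → ℝ)
    (i : Fin n) : ℝ :=
  (1 / 2) * ∑ j, ∑ k, chr a x i j k * y j * y k

/-- Covariant derivative `v_{i|j}` of a 1-form `v` with respect to `α`. -/
def covD {n : ℕ} (a : (Fin n → ℝ) → Matrix (Fin n) (Fin n) ℝ)
    (v : (Fin n → ℝ) → Fin n → ℝ) (x : Fin n → ℝ) (i j : Fin n) : ℝ :=
  pd (fun z => v z i) x j - ∑ k, v x k * chr a x k i j

/-- `r_{ij} = ½(v_{i|j} + v_{j|i})`. -/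
def rSym {n : ℕ} (a : (Fin n → ℝ) → Matrix (Fin n) (Fin n) ℝ)
    (v : (Fin n → ℝ) → Fin n → ℝ) (x : Fin n → ℝ) (i j : Fin n) : ℝ :=
  (1 / 2) * (covD a v x i j + covD a v x j i)

/-- `s_{ij} = ½(v_{i|j} − v_{j|i})`. -/
def sSym {n : ℕ} (a : (Fin n → ℝ) → Matrix (Fin n) (Fin n) ℝ)
    (v : (Fin n → ℝ) → Fin n → ℝ) (x : Fin n → ℝ) (i j : Fin n) : ℝ :=
  (1 / 2) * (covD a v x i j - covD a v x j i)

/-- `r_{00} = r_{ij} y^i y^j`. -/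
def r00 {n : ℕ} (a : (Fin n → ℝ) → Matrix (Fin n) (Fin n) ℝ)
    (v : (Fin n → ℝ) → Fin n → ℝ) (x y : Fin n → ℝ) : ℝ :=
  ∑ i, ∑ j, rSym a v x i j * y i * y j

/-- `s_{j0} = s_{jk} y^k`. -/
def s0low {n : ℕ} (a : (Fin n → ℝ) → Matrix (Fin n) (Fin n) ℝ)
    (v : (Fin n → ℝ) → Fin n → ℝ) (x y : Fin n → ℝ) (j : Fin n) : ℝ :=
  ∑ k, sSym a v x j k * y k

/-- `s^i_0 = a^{ij} s_{j0}`. -/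
def sUp0 {n : ℕ} (a : (Fin n → ℝ) → Matrix (Fin n) (Fin n) ℝ)
    (v : (Fin n → ℝ) → Fin n → ℝ) (x y : Fin n → ℝ) (i : Fin n) : ℝ :=
  ∑ j, (a x)⁻¹ i j * s0low a v x y j

/-- Contraction `w_i · (s of v)^i_0`. -/
def contrS {n : ℕ} (a : (Fin n → ℝ) → Matrix (Fin n) (Fin n) ℝ)
    (v w : (Fin n → ℝ) → Fin n → ℝ) (x y : Fin n → ℝ) : ℝ :=
  ∑ i, w x i * sUp0 a v x y i

/-- Fundamental tensor of `F(x,·)` as a matrix. -/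
def gmatF {n : ℕ} (F : (Fin n → ℝ) → (Fin n → ℝ) → ℝ) (x y : Fin n → ℝ) :
    Matrix (Fin n) (Fin n) ℝ :=
  Matrix.of fun i j => fundT (F x) y i j

/-- Spray coefficients `G^i = ¼ g^{il}(∂g_{jl}/∂x^k + ∂g_{lk}/∂x^j − ∂g_{jk}/∂x^l) y^j y^k`. -/
def sprayF {n : ℕ} (F : (Fin n → ℝ) → (Fin n → ℝ) → ℝ) (x y : Fin n → ℝ) (i : Fin n) : ℝ :=
  (1 / 4) * ∑ l, (gmatF F x y)⁻¹ i l *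
    ∑ j, ∑ k, (pd (fun z => gmatF F z y j l) x k
        + pd (fun z => gmatF F z y l k) x j
        - pd (fun z => gmatF F z y j k) x l) * y j * y k

/-!
Let `EL F` be the Euler–Lagrange covector of `F`, evaluated on vectors tangent to spray
trajectories. It is linear in `F`, and the spray of a Finsler metric is the one that makes it
vanish. For `F = α φ(β/α) + γ` this gives an equation for the difference `W` of the sprays of
`F` and `α`, taken modulo `y`, in terms of the symmetric and skew parts `r`, `s` of the
covariant derivative of `β` and the skew part `s̄` of that of `γ`. The Douglas condition says
exactly that `W` is polynomial in `y` (and then even).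

For `φ = exp` the odd part in `y` of this equation reads
`-(β/α) W = α³ (s₀ + cosh(β/α) s̄₀)`. On the unit circle in a plane spanned by the dual of `β` and
a vector of `ker β`, the function `cosh(β/α)` is not algebraic, which forces `s̄₀` to vanish on
`ker β`, and a skew form vanishing on the kernel of a nonzero covector is zero. The same argument
without the transcendental term gives `s = 0`, then `W = 0`, and the even part leaves `r = 0`.
-/

open Function Filter
open scoped Matrix ContDiff Topology

section PartialDerivatives

variable {E F G : Type*} [NormedAddCommGroup E] [NormedSpace ℝ E] [NormedAddCommGroup F]
  [NormedSpace ℝ F] [NormedAddCommGroup G] [NormedSpace ℝ G]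

lemma fderiv_uncurry_prodMk_zero {H : E → F → G} {x : E} {y : F}
    (h : DifferentiableAt ℝ (uncurry H) (x, y)) (u : E) :
    fderiv ℝ (uncurry H) (x, y) (u, 0) = fderiv ℝ (fun z => H z y) x u := by
  rw [((h.hasFDerivAt (x := (x, y))).comp (f := fun z => (z, y)) x
    (hasFDerivAt_prodMk_left x y)).fderiv (f := fun z => H z y)]
  simp

lemma fderiv_uncurry_zero_prodMk {H : E → F → G} {x : E} {y : F}
    (h : DifferentiableAt ℝ (uncurry H) (x, y)) (v : F) :
    fderiv ℝ (uncurry H) (x, y) (0, v) = fderiv ℝ (H x) y v := by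
  rw [((h.hasFDerivAt (x := (x, y))).comp (f := fun w => (x, w)) y
    (hasFDerivAt_prodMk_right x y)).fderiv (f := H x)]
  simp

lemma fderiv_uncurry_apply {H : E → F → G} {x : E} {y : F}
    (h : DifferentiableAt ℝ (uncurry H) (x, y)) (u : E) (v : F) :
    fderiv ℝ (uncurry H) (x, y) (u, v) =
      fderiv ℝ (fun z => H z y) x u + fderiv ℝ (H x) y v := by
  rw [← fderiv_uncurry_prodMk_zero h, ← fderiv_uncurry_zero_prodMk h, ← map_add]
  simp

end PartialDerivatives

section VerticalDerivatives

variable {n : ℕ}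

lemma sum_pd_mul (f : (Fin n → ℝ) → ℝ) (y v : Fin n → ℝ) :
    ∑ i, pd f y i * v i = fderiv ℝ f y v := by
  conv_rhs => rw [← ContinuousLinearMap.coe_coe, LinearMap.pi_apply_eq_sum_univ]
  refine Finset.sum_congr rfl fun i _ => ?_
  rw [ContinuousLinearMap.coe_coe, smul_eq_mul, mul_comm, pd]
  congr 2
  ext j
  simp [Pi.single_apply, eq_comm]

lemma pd_congr_of_eventuallyEq {f g : (Fin n → ℝ) → ℝ} {y : Fin n → ℝ} (h : f =ᶠ[𝓝 y] g)
    (i : Fin n) : pd f y i = pd g y i := by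
  rw [pd, pd, h.fderiv_eq]

/-- The vertical derivative `∂H/∂y^l` of a function `H(x, y)`. -/
def vpd (H : (Fin n → ℝ) → (Fin n → ℝ) → ℝ) (l : Fin n) (x y : Fin n → ℝ) : ℝ :=
  pd (H x) y l

variable {H : (Fin n → ℝ) → (Fin n → ℝ) → ℝ} {x y : Fin n → ℝ}

lemma eventually_differentiableAt_section (h : ContDiffAt ℝ ∞ (uncurry H) (x, y)) :
    ∀ᶠ p in 𝓝 (x, y), DifferentiableAt ℝ (H p.1) p.2 := by
  filter_upwards [(h.of_le (m := 1) (by simp)).eventually (by simp)] with p hp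
  exact (hp.differentiableAt one_ne_zero).comp (f := fun w => (p.1, w)) p.2
    (hasFDerivAt_prodMk_right p.1 p.2).differentiableAt

lemma differentiableAt_section_left (h : ContDiffAt ℝ ∞ (uncurry H) (x, y)) :
    DifferentiableAt ℝ (fun z => H z y) x :=
  (h.differentiableAt (by simp)).comp (f := fun z => (z, y)) x
    (hasFDerivAt_prodMk_left x y).differentiableAt

lemma uncurry_vpd_eventuallyEq (h : ContDiffAt ℝ ∞ (uncurry H) (x, y)) (l : Fin n) :
    uncurry (vpd H l) =ᶠ[𝓝 (x, y)]
      fun p => fderiv ℝ (uncurry H) p ((0 : Fin n → ℝ), Pi.single l (1 : ℝ)) := by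
  filter_upwards [(h.of_le (m := 1) (by simp)).eventually (by simp)] with p hp
  exact (fderiv_uncurry_zero_prodMk (hp.differentiableAt one_ne_zero) _).symm

lemma contDiffAt_uncurry_vpd (h : ContDiffAt ℝ ∞ (uncurry H) (x, y)) (l : Fin n) :
    ContDiffAt ℝ ∞ (uncurry (vpd H l)) (x, y) :=
  ((h.fderiv_right (m := ∞) (by simp)).clm_apply contDiffAt_const).congr_of_eventuallyEq
    (uncurry_vpd_eventuallyEq h l)

lemma vpd_vpd_comm (h : ContDiffAt ℝ ∞ (H x) y) (i j : Fin n) :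
    vpd (vpd H i) j x y = vpd (vpd H j) i x y := by
  have hdiff : DifferentiableAt ℝ (fderiv ℝ (H x)) y :=
    (h.fderiv_right (m := ∞) (by simp)).differentiableAt (by simp)
  have hvpd (i j : Fin n) : vpd (vpd H i) j x y =
      fderiv ℝ (fderiv ℝ (H x)) y (Pi.single j 1) (Pi.single i 1) := by
    change fderiv ℝ (fun z => fderiv ℝ (H x) z (Pi.single i 1)) y (Pi.single j 1) = _
    simp [fderiv_clm_apply hdiff (differentiableAt_const _)]
  have hsmooth : minSmoothness ℝ 2 ≤ ∞ := by
    rw [minSmoothness_of_isRCLikeNormedField]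
    exact ENat.LEInfty.out
  rw [hvpd, hvpd, (h.isSymmSndFDerivAt hsmooth).eq]

end VerticalDerivatives

section Homogeneous

variable {n : ℕ}

/-- Positive homogeneity of degree `k`: `f (t • y) = t ^ k * f y` for `t > 0`. -/
def PosHomogeneous (k : ℕ) (f : (Fin n → ℝ) → ℝ) : Prop :=
  ∀ t : ℝ, 0 < t → ∀ y, f (t • y) = t ^ k * f y

namespace PosHomogeneous

variable {k : ℕ} {f g : (Fin n → ℝ) → ℝ}

lemma pow_two (hf : PosHomogeneous k f) : PosHomogeneous (2 * k) fun y => f y ^ 2 := by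
  intro t ht y
  simp only [hf t ht y]
  ring

lemma pd (hf : PosHomogeneous (k + 1) f) (i : Fin n) : PosHomogeneous k fun y => pd f y i := by
  intro t ht y
  have hscale : fderiv ℝ (fun z => f (t • z)) y = fderiv ℝ (t ^ (k + 1) • f) y := by
    congr 1
    ext z
    exact hf t ht z
  rw [fderiv_comp_smul, fderiv_const_smul_field] at hscale
  have hi := congrArg (fun L : (Fin n → ℝ) →L[ℝ] ℝ => L (Pi.single i 1)) hscale
  simp only [smul_apply, Pi.smul_apply, smul_eq_mul] at hi
  refine mul_left_cancel₀ ht.ne' (hi.trans ?_)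
  rw [pow_succ', mul_assoc]
  rfl

lemma fderiv_apply_self (hf : PosHomogeneous k f) {y : Fin n → ℝ} (hd : DifferentiableAt ℝ f y) :
    fderiv ℝ f y y = k * f y := by
  have hray : HasDerivAt (fun t : ℝ => f (t • y)) (fderiv ℝ f y y) 1 := by
    have hline : HasDerivAt (fun t : ℝ => t • y) y 1 := by
      simpa using (hasDerivAt_id (1 : ℝ)).smul_const y
    exact HasFDerivAt.comp_hasDerivAt (1 : ℝ) (by simpa using hd.hasFDerivAt) hline
  have hpow : HasDerivAt (fun t : ℝ => t ^ k * f y) (k * f y) 1 := by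
    simpa using (hasDerivAt_pow k (1 : ℝ)).mul_const (f y)
  refine hray.unique (hpow.congr_of_eventuallyEq ?_)
  filter_upwards [lt_mem_nhds zero_lt_one] with t ht using hf t ht y

lemma sum_pd_mul_self (hf : PosHomogeneous k f) {y : Fin n → ℝ} (hd : DifferentiableAt ℝ f y) :
    ∑ i, _root_.pd f y i * y i = k * f y := by
  rw [sum_pd_mul, hf.fderiv_apply_self hd]

end PosHomogeneous

end Homogeneous

section EulerLagrange

variable {n : ℕ}

/-- The Euler–Lagrange expression `d/dt (∂H/∂y^l) - ∂H/∂x^l` of a Lagrangian `H(x, y)` along a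
curve passing through `x` with velocity `y` and acceleration `v`. -/
def eulerLagrange (H : (Fin n → ℝ) → (Fin n → ℝ) → ℝ) (x y v : Fin n → ℝ) (l : Fin n) : ℝ :=
  fderiv ℝ (uncurry (vpd H l)) (x, y) (y, v) - pd (fun z => H z y) x l

variable {H : (Fin n → ℝ) → (Fin n → ℝ) → ℝ} {x y : Fin n → ℝ}

lemma eulerLagrange_eq_add (h : ContDiffAt ℝ ∞ (uncurry H) (x, y)) (v : Fin n → ℝ) (l : Fin n) :
    eulerLagrange H x y v l = eulerLagrange H x y 0 l + fderiv ℝ (vpd H l x) y v := by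
  have hd := (contDiffAt_uncurry_vpd h l).differentiableAt (by simp)
  simp only [eulerLagrange, fderiv_uncurry_apply hd, map_zero]
  ring

lemma sum_eulerLagrange_mul {k : ℕ} (h : ContDiffAt ℝ ∞ (uncurry H) (x, y))
    (hk : ∀ᶠ z in 𝓝 x, PosHomogeneous (k + 1) (H z)) (v : Fin n → ℝ) :
    ∑ l, eulerLagrange H x y v l * y l = k * fderiv ℝ (uncurry H) (x, y) (y, v) := by
  have hd := h.differentiableAt (by simp)
  have hdv l := (contDiffAt_uncurry_vpd h l).differentiableAt (by simp)
  have heuler : (fun p : (Fin n → ℝ) × (Fin n → ℝ) => ∑ l, uncurry (vpd H l) p * p.2 l)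
      =ᶠ[𝓝 (x, y)] fun p => (k + 1 : ℕ) * uncurry H p := by
    filter_upwards [eventually_differentiableAt_section h,
      continuousAt_fst.eventually hk] with p hp hpk using hpk.sum_pd_mul_self hp
  have hsnd := hasFDerivAt_pi'.1 (hasFDerivAt_snd (𝕜 := ℝ) (p := (x, y)))
  have hderiv : ∑ l, vpd H l x y * v l + ∑ l, y l * fderiv ℝ (uncurry (vpd H l)) (x, y) (y, v) =
      (k + 1) * fderiv ℝ (uncurry H) (x, y) (y, v) := by
    simpa [Finset.sum_add_distrib] using congrArg (fun L => L (y, v)) <|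
      (HasFDerivAt.fun_sum fun l _ => (hdv l).hasFDerivAt.fun_mul (hsnd l)).unique
        ((hd.hasFDerivAt.const_mul _).congr_of_eventuallyEq heuler)
  have hvertical : ∑ l, vpd H l x y * v l = fderiv ℝ (H x) y v := sum_pd_mul (H x) y v
  have hhorizontal := sum_pd_mul (fun z => H z y) x y
  simp only [mul_comm (y _)] at hderiv
  simp only [eulerLagrange, sub_mul, Finset.sum_sub_distrib, hhorizontal]
  linear_combination hderiv - hvertical + fderiv_uncurry_apply hd y v

lemma eulerLagrange_sq (h : ContDiffAt ℝ ∞ (uncurry H) (x, y)) (v : Fin n → ℝ) (l : Fin n) :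
    eulerLagrange (fun z w => H z w ^ 2) x y v l =
      2 * (H x y * eulerLagrange H x y v l
        + fderiv ℝ (uncurry H) (x, y) (y, v) * vpd H l x y) := by
  have hd := h.differentiableAt (by simp)
  have hvpd : uncurry (vpd (fun z w => H z w ^ 2) l) =ᶠ[𝓝 (x, y)]
      fun p => 2 * (uncurry H p * uncurry (vpd H l) p) := by
    filter_upwards [eventually_differentiableAt_section h] with p hp
    simp [uncurry, vpd, pd, fderiv_fun_pow 2 hp, mul_assoc]
  have hdv := (contDiffAt_uncurry_vpd h l).differentiableAt (by simp)
  have hmul := ((hd.hasFDerivAt.fun_mul hdv.hasFDerivAt).const_mul (2 : ℝ)).fderiv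
  simp only [eulerLagrange, hvpd.fderiv_eq, pd,
    fderiv_fun_pow 2 (differentiableAt_section_left h), hmul]
  simp only [smul_apply, add_apply, smul_eq_mul, uncurry_apply_pair, Nat.add_one_sub_one, pow_one,
    nsmul_eq_mul, Nat.cast_ofNat]
  ring

end EulerLagrange

section Finsler

variable {n : ℕ} {F : (Fin n → ℝ) → (Fin n → ℝ) → ℝ} {x y : Fin n → ℝ}

lemma sum_pd_mul_const {f : Fin n → (Fin n → ℝ) → ℝ} (hf : ∀ j, DifferentiableAt ℝ (f j) x)
    (c : Fin n → ℝ) (k : Fin n) :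
    ∑ j, pd (f j) x k * c j = pd (fun z => ∑ j, f j z * c j) x k := by
  simp only [pd]
  rw [fderiv_fun_sum fun j _ => (hf j).mul_const (c j)]
  simp [fderiv_mul_const (hf _), mul_comm]

/-- A Finsler metric on `U`: smooth off the zero section, positively homogeneous of degree one
in `y`, positive, with positive definite fundamental tensor. -/
structure IsFinslerMetric (U : Set (Fin n → ℝ)) (F : (Fin n → ℝ) → (Fin n → ℝ) → ℝ) : Prop where
  contDiffAt : ∀ x ∈ U, ∀ y ≠ 0, ContDiffAt ℝ ∞ (uncurry F) (x, y)
  posHomogeneous : ∀ x ∈ U, PosHomogeneous 1 (F x)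
  pos : ∀ x ∈ U, ∀ y ≠ 0, 0 < F x y
  posDef : ∀ x ∈ U, ∀ y ≠ 0, (gmatF F x y).PosDef

lemma contDiffAt_section (h : ContDiffAt ℝ ∞ (uncurry F) (x, y)) : ContDiffAt ℝ ∞ (F x) y :=
  h.comp (f := fun w => (x, w)) y (contDiffAt_const.prodMk contDiffAt_id)

lemma gmatF_isSymm (h : ContDiffAt ℝ ∞ (F x) y) : (gmatF F x y).IsSymm := by
  ext i j
  exact congrArg (1 / 2 * ·) (vpd_vpd_comm (H := fun z w => F z w ^ 2) (h.pow 2) i j)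

lemma fderiv_vpd_sq (h : ContDiffAt ℝ ∞ (F x) y) (v : Fin n → ℝ) (l : Fin n) :
    fderiv ℝ (vpd (fun z w => F z w ^ 2) l x) y v = 2 * (gmatF F x y *ᵥ v) l := by
  rw [← sum_pd_mul, Matrix.mulVec, dotProduct, Finset.mul_sum]
  refine Finset.sum_congr rfl fun i _ => ?_
  have hentry : gmatF F x y i l = 1 / 2 * pd (vpd (fun z w => F z w ^ 2) l x) y i := rfl
  rw [(gmatF_isSymm h).apply i l, hentry]
  ring

lemma sum_gmatF_mul (hF : PosHomogeneous 1 (F x)) (h : ContDiffAt ℝ ∞ (uncurry F) (x, y))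
    (l : Fin n) :
    ∑ j, gmatF F x y j l * y j = 1 / 2 * vpd (fun z w => F z w ^ 2) l x y := by
  have hsq : ContDiffAt ℝ ∞ (uncurry fun z w => F z w ^ 2) (x, y) := h.pow 2
  have heuler := (hF.pow_two.pd l).sum_pd_mul_self
    ((contDiffAt_section (contDiffAt_uncurry_vpd hsq l)).differentiableAt (by simp))
  rw [Nat.cast_one, one_mul] at heuler
  simp only [gmatF, fundT, Matrix.of_apply, mul_assoc, ← Finset.mul_sum]
  exact congrArg (1 / 2 * ·) heuler

lemma sum_gmatF_mul_mul (hF : PosHomogeneous 1 (F x)) (h : ContDiffAt ℝ ∞ (uncurry F) (x, y)) :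
    ∑ k, (∑ j, gmatF F x y j k * y j) * y k = F x y ^ 2 := by
  have heuler := hF.pow_two.sum_pd_mul_self (((contDiffAt_section h).pow 2).differentiableAt
    (by simp))
  simp only [sum_gmatF_mul hF h, mul_assoc, ← Finset.mul_sum]
  change 1 / 2 * (∑ k, pd (fun w => F x w ^ 2) y k * y k) = _
  rw [heuler]
  push_cast
  ring

lemma contDiffAt_gmatF (h : ContDiffAt ℝ ∞ (uncurry F) (x, y)) (i j : Fin n) :
    ContDiffAt ℝ ∞ (fun z => gmatF F z y i j) x := by
  have hsq : ContDiffAt ℝ ∞ (uncurry fun z w => F z w ^ 2) (x, y) := h.pow 2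
  exact contDiffAt_const.mul <| (contDiffAt_uncurry_vpd (contDiffAt_uncurry_vpd hsq j) i).comp
    (f := fun z => (z, y)) x (contDiffAt_id.prodMk contDiffAt_const)

lemma sum_sum_add_sub_mul_mul (A B C : Fin n → Fin n → ℝ) (y : Fin n → ℝ) :
    ∑ j, ∑ k, (A j k + B j k - C j k) * y j * y k =
      ∑ k, (∑ j, A j k * y j) * y k + ∑ j, (∑ k, B j k * y k) * y j
        - ∑ k, (∑ j, C j k * y j) * y k := by
  simp only [sub_mul, add_mul, Finset.sum_sub_distrib, Finset.sum_add_distrib, Finset.sum_mul]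
  rw [Finset.sum_comm (f := fun k j => A j k * y j * y k),
    Finset.sum_comm (f := fun k j => C j k * y j * y k)]
  simp only [mul_right_comm (B _ _)]

namespace IsFinslerMetric

variable {U : Set (Fin n → ℝ)}

lemma contDiffAt_sq (hF : IsFinslerMetric U F) (hx : x ∈ U) (hy : y ≠ 0) :
    ContDiffAt ℝ ∞ (uncurry fun z w => F z w ^ 2) (x, y) :=
  (hF.contDiffAt x hx y hy).pow 2

lemma gmatF_apply_comm (hF : IsFinslerMetric U F) (hx : x ∈ U) (hy : y ≠ 0) (i j : Fin n) :
    gmatF F x y i j = gmatF F x y j i :=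
  (gmatF_isSymm (contDiffAt_section (hF.contDiffAt x hx y hy))).apply j i

lemma differentiableAt_gmatF (hF : IsFinslerMetric U F) (hx : x ∈ U) (hy : y ≠ 0) (i j : Fin n) :
    DifferentiableAt ℝ (fun z => gmatF F z y i j) x :=
  (contDiffAt_gmatF (hF.contDiffAt x hx y hy) i j).differentiableAt (by simp)

lemma sum_pd_gmatF_mul (hF : IsFinslerMetric U F) (hU : IsOpen U) (hx : x ∈ U) (hy : y ≠ 0)
    (k l : Fin n) :
    ∑ j, pd (fun z => gmatF F z y j l) x k * y j =
      1 / 2 * pd (fun z => vpd (fun z w => F z w ^ 2) l z y) x k := by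
  have hd : DifferentiableAt ℝ (fun z => vpd (fun z w => F z w ^ 2) l z y) x :=
    differentiableAt_section_left (contDiffAt_uncurry_vpd (hF.contDiffAt_sq hx hy) l)
  have hcontract : (fun z => ∑ j, gmatF F z y j l * y j) =ᶠ[𝓝 x]
      fun z => 1 / 2 * vpd (fun z w => F z w ^ 2) l z y := by
    filter_upwards [hU.mem_nhds hx] with z hz using
      sum_gmatF_mul (hF.posHomogeneous z hz) (hF.contDiffAt z hz y hy) l
  rw [sum_pd_mul_const fun j => hF.differentiableAt_gmatF hx hy j l,
    pd_congr_of_eventuallyEq hcontract]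
  simp [pd, fderiv_const_mul hd]

lemma sum_pd_gmatF_mul_mul (hF : IsFinslerMetric U F) (hU : IsOpen U) (hx : x ∈ U) (hy : y ≠ 0)
    (l : Fin n) :
    ∑ k, (∑ j, pd (fun z => gmatF F z y j k) x l * y j) * y k =
      pd (fun z => F z y ^ 2) x l := by
  have hd i j := hF.differentiableAt_gmatF hx hy i j
  simp only [sum_pd_mul_const fun j => hd j _]
  rw [sum_pd_mul_const fun k => .fun_sum fun j _ => (hd j k).mul_const _]
  refine pd_congr_of_eventuallyEq ?_ l
  filter_upwards [hU.mem_nhds hx] with z hz using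
    sum_gmatF_mul_mul (hF.posHomogeneous z hz) (hF.contDiffAt z hz y hy)

lemma sum_sum_pd_gmatF_mul_mul (hF : IsFinslerMetric U F) (hU : IsOpen U) (hx : x ∈ U)
    (hy : y ≠ 0) (l : Fin n) :
    ∑ j, ∑ k, (pd (fun z => gmatF F z y j l) x k + pd (fun z => gmatF F z y l k) x j
      - pd (fun z => gmatF F z y j k) x l) * y j * y k =
    eulerLagrange (fun z w => F z w ^ 2) x y 0 l := by
  have hsymm (j k : Fin n) :
      pd (fun z => gmatF F z y l k) x j = pd (fun z => gmatF F z y k l) x j := by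
    refine pd_congr_of_eventuallyEq ?_ j
    filter_upwards [hU.mem_nhds hx] with z hz using hF.gmatF_apply_comm hz hy l k
  have hhorizontal : ∑ k, pd (fun z => vpd (fun z w => F z w ^ 2) l z y) x k * y k =
      fderiv ℝ (uncurry (vpd (fun z w => F z w ^ 2) l)) (x, y) (y, 0) := by
    rw [sum_pd_mul, fderiv_uncurry_prodMk_zero
      ((contDiffAt_uncurry_vpd (hF.contDiffAt_sq hx hy) l).differentiableAt (by simp))]
  simp only [sum_sum_add_sub_mul_mul, hF.sum_pd_gmatF_mul_mul hU hx hy]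
  rw [eulerLagrange, ← hhorizontal]
  simp only [hsymm, hF.sum_pd_gmatF_mul hU hx hy, mul_assoc, ← Finset.mul_sum]
  ring

lemma eulerLagrange_sq_sprayF (hF : IsFinslerMetric U F) (hU : IsOpen U) (hx : x ∈ U)
    (hy : y ≠ 0) (l : Fin n) :
    eulerLagrange (fun z w => F z w ^ 2) x y (-(2 : ℝ) • sprayF F x y) l = 0 := by
  have hspray : sprayF F x y = (1 / 4 : ℝ) • (gmatF F x y)⁻¹ *ᵥ
      eulerLagrange (fun z w => F z w ^ 2) x y 0 := by
    ext i
    simp only [sprayF, hF.sum_sum_pd_gmatF_mul_mul hU hx hy]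
    rfl
  have hlower : gmatF F x y *ᵥ sprayF F x y =
      (1 / 4 : ℝ) • eulerLagrange (fun z w => F z w ^ 2) x y 0 := by
    rw [hspray, Matrix.mulVec_smul, Matrix.mulVec_mulVec, Matrix.mul_nonsing_inv _
      ((Matrix.isUnit_iff_isUnit_det _).1 (hF.posDef x hx y hy).isUnit), Matrix.one_mulVec]
  rw [eulerLagrange_eq_add (hF.contDiffAt_sq hx hy), map_smul,
    fderiv_vpd_sq (contDiffAt_section (hF.contDiffAt x hx y hy)), hlower,
    Pi.smul_apply, smul_eq_mul, smul_eq_mul]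
  ring

lemma fderiv_sprayF (hF : IsFinslerMetric U F) (hU : IsOpen U) (hx : x ∈ U) (hy : y ≠ 0) :
    fderiv ℝ (uncurry F) (x, y) (y, -(2 : ℝ) • sprayF F x y) = 0 := by
  have hsq := (((hF.contDiffAt x hx y hy).differentiableAt (by simp)).hasFDerivAt.pow 2).fderiv
  have henergy : fderiv ℝ (uncurry fun z w => F z w ^ 2) (x, y)
      (y, -(2 : ℝ) • sprayF F x y) = 0 := by
    have hhom : ∀ᶠ z in 𝓝 x, PosHomogeneous (1 + 1) fun w => F z w ^ 2 := by
      filter_upwards [hU.mem_nhds hx] with z hz using (hF.posHomogeneous z hz).pow_two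
    have hsum := sum_eulerLagrange_mul (hF.contDiffAt_sq hx hy) hhom (-(2 : ℝ) • sprayF F x y)
    simp only [hF.eulerLagrange_sq_sprayF hU hx hy, zero_mul, Finset.sum_const_zero] at hsum
    simpa only [Nat.cast_one, one_mul] using hsum.symm
  rw [show (uncurry fun z w => F z w ^ 2) = fun p => uncurry F p ^ 2 from rfl, hsq] at henergy
  simpa [(hF.pos x hx y hy).ne'] using henergy

lemma eulerLagrange_sprayF (hF : IsFinslerMetric U F) (hU : IsOpen U) (hx : x ∈ U) (hy : y ≠ 0)
    (l : Fin n) : eulerLagrange F x y (-(2 : ℝ) • sprayF F x y) l = 0 := by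
  have hsq := hF.eulerLagrange_sq_sprayF hU hx hy l
  rw [eulerLagrange_sq (hF.contDiffAt x hx y hy), hF.fderiv_sprayF hU hx hy] at hsq
  simpa [(hF.pos x hx y hy).ne'] using hsq

end IsFinslerMetric

section RiemannianNorm

variable {n : ℕ} {A : Matrix (Fin n) (Fin n) ℝ} {y : Fin n → ℝ}

lemma alph_eq_sqrt (A : Matrix (Fin n) (Fin n) ℝ) (y : Fin n → ℝ) :
    alph A y = √(y ⬝ᵥ A *ᵥ y) := by
  have hterm (i j : Fin n) : A i j * y i * y j = y i * (A i j * y j) := by ring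
  simp only [alph, dotProduct, Matrix.mulVec, Finset.mul_sum, hterm]

lemma alph_sq (hA : A.PosDef) (y : Fin n → ℝ) : alph A y ^ 2 = y ⬝ᵥ A *ᵥ y := by
  rw [alph_eq_sqrt, Real.sq_sqrt (by simpa using hA.posSemidef.dotProduct_mulVec_nonneg y)]

lemma alph_pos (hA : A.PosDef) (hy : y ≠ 0) : 0 < alph A y := by
  rw [alph_eq_sqrt]
  exact Real.sqrt_pos.2 (by simpa using hA.dotProduct_mulVec_pos hy)

lemma posHomogeneous_alph (A : Matrix (Fin n) (Fin n) ℝ) : PosHomogeneous 1 (alph A) := by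
  intro t ht y
  simp only [alph_eq_sqrt, Matrix.mulVec_smul, smul_dotProduct, dotProduct_smul, smul_eq_mul]
  rw [← mul_assoc, Real.sqrt_mul (mul_self_nonneg t), Real.sqrt_mul_self ht.le, pow_one]

lemma posDef_isSymm (hA : A.PosDef) : A.IsSymm :=
  Matrix.isHermitian_iff_isSymm.1 hA.isHermitian

lemma dotProduct_mulVec_of_isSymm (hA : A.IsSymm) (u v : Fin n → ℝ) :
    u ⬝ᵥ A *ᵥ v = (A *ᵥ u) ⬝ᵥ v := by
  rw [Matrix.dotProduct_mulVec, ← Matrix.mulVec_transpose, hA.eq]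

/-- The continuous linear functional `v ↦ b ⬝ᵥ v` given by a covector `b`. -/
def covector (b : Fin n → ℝ) : (Fin n → ℝ) →L[ℝ] ℝ :=
  LinearMap.toContinuousLinearMap (dotProductBilin ℝ ℝ b)

@[simp]
lemma covector_apply (b v : Fin n → ℝ) : covector b v = b ⬝ᵥ v := rfl

lemma hasFDerivAt_quadratic (hA : A.IsSymm) (y : Fin n → ℝ) :
    HasFDerivAt (fun z => z ⬝ᵥ A *ᵥ z) ((2 : ℝ) • covector (A *ᵥ y)) y := by
  have hbilin := (Matrix.toBilin' A).toContinuousBilinearMap.hasFDerivAt_of_bilinear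
    (hasFDerivAt_id y) (hasFDerivAt_id y)
  simp only [LinearMap.toContinuousBilinearMap_apply, Matrix.toBilin'_apply', id] at hbilin
  refine hbilin.congr_fderiv (ContinuousLinearMap.ext fun v => ?_)
  simp [Matrix.toBilin'_apply', dotProduct_mulVec_of_isSymm hA y, dotProduct_comm v, two_mul]

lemma fundT_alph (hA : A.PosDef) (y : Fin n → ℝ) (i j : Fin n) : fundT (alph A) y i j = A i j := by
  have hpd : (fun z => pd (fun z => alph A z ^ 2) z j) = fun z => 2 * (A j ⬝ᵥ z) := by
    ext z
    simp [alph_sq hA, pd, (hasFDerivAt_quadratic (posDef_isSymm hA) z).fderiv, Matrix.mulVec]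
  have hlin : HasFDerivAt (fun z => 2 * (A j ⬝ᵥ z)) ((2 : ℝ) • covector (A j)) y :=
    (covector (A j)).hasFDerivAt.const_mul 2
  rw [fundT, pd2, hpd, pd, hlin.fderiv]
  simp [(posDef_isSymm hA).apply i j]

lemma hasFDerivAt_alph (hA : A.PosDef) (hy : y ≠ 0) :
    HasFDerivAt (alph A) ((alph A y)⁻¹ • covector (A *ᵥ y)) y := by
  have hpos : 0 < y ⬝ᵥ A *ᵥ y := by simpa using hA.dotProduct_mulVec_pos hy
  rw [funext (alph_eq_sqrt A)]
  refine ((hasFDerivAt_quadratic (posDef_isSymm hA) y).sqrt hpos.ne').congr_fderiv ?_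
  rw [smul_smul]
  congr 1
  field_simp

lemma pd_alph (hA : A.PosDef) (hy : y ≠ 0) (l : Fin n) :
    pd (alph A) y l = (A *ᵥ y) l / alph A y := by
  rw [pd, (hasFDerivAt_alph hA hy).fderiv]
  simp [div_eq_inv_mul]

lemma fderiv_pd_alph (hA : A.PosDef) (hy : y ≠ 0) (l : Fin n) (v : Fin n → ℝ) :
    fderiv ℝ (fun z => pd (alph A) z l) y v =
      ((A *ᵥ v) l - (A *ᵥ y) l * ((A *ᵥ y) ⬝ᵥ v) / alph A y ^ 2) / alph A y := by
  have hnear : (fun z => pd (alph A) z l) =ᶠ[𝓝 y] fun z => A l ⬝ᵥ z * (alph A z)⁻¹ := by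
    filter_upwards [isOpen_ne.mem_nhds hy] with z hz
    rw [pd_alph hA hz, div_eq_mul_inv, Matrix.mulVec]
  have hne := (alph_pos hA hy).ne'
  have hprod : HasFDerivAt (fun z => A l ⬝ᵥ z * (alph A z)⁻¹) _ y :=
    (covector (A l)).hasFDerivAt.mul
      ((hasDerivAt_inv hne).comp_hasFDerivAt y (hasFDerivAt_alph hA hy))
  rw [hnear.fderiv_eq, hprod.fderiv]
  simp only [add_apply, smul_apply, covector_apply, smul_eq_mul, Matrix.mulVec]
  field_simp
  ring

end RiemannianNorm

section RiemannianMetric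

variable {n : ℕ} {U : Set (Fin n → ℝ)} {a : (Fin n → ℝ) → Matrix (Fin n) (Fin n) ℝ}
  {x y : Fin n → ℝ}

/-- A smooth Riemannian metric `a_{ij}(x)` on `U`. -/
structure IsRiemannianMetric (U : Set (Fin n → ℝ))
    (a : (Fin n → ℝ) → Matrix (Fin n) (Fin n) ℝ) : Prop where
  contDiffOn : ∀ i j, ContDiffOn ℝ ∞ (fun x => a x i j) U
  posDef : ∀ x ∈ U, (a x).PosDef

lemma contDiffAt_snd_apply (x y : Fin n → ℝ) (i : Fin n) :
    ContDiffAt ℝ ∞ (fun p : (Fin n → ℝ) × (Fin n → ℝ) => p.2 i) (x, y) :=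
  (contDiff_apply ℝ ℝ i).contDiffAt.comp (x, y) contDiffAt_snd

lemma contDiffAt_uncurry_oneForm {v : (Fin n → ℝ) → Fin n → ℝ} (hU : IsOpen U)
    (hv : ∀ i, ContDiffOn ℝ ∞ (fun x => v x i) U) (hx : x ∈ U) (y : Fin n → ℝ) :
    ContDiffAt ℝ ∞ (uncurry fun z => oneForm (v z)) (x, y) := by
  have hcoef (i : Fin n) : ContDiffAt ℝ ∞ (fun p => v p.1 i) (x, y) :=
    ((hv i).contDiffAt (hU.mem_nhds hx)).comp (x, y) contDiffAt_fst
  change ContDiffAt ℝ ∞ (fun p => ∑ i, v p.1 i * p.2 i) (x, y)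
  exact ContDiffAt.sum fun i _ => (hcoef i).mul (contDiffAt_snd_apply x y i)

namespace IsRiemannianMetric

lemma contDiffAt_uncurry_alph (ha : IsRiemannianMetric U a) (hU : IsOpen U) (hx : x ∈ U)
    (hy : y ≠ 0) : ContDiffAt ℝ ∞ (uncurry fun z => alph (a z)) (x, y) := by
  have hcoef (i j : Fin n) : ContDiffAt ℝ ∞ (fun p => a p.1 i j) (x, y) :=
    ((ha.contDiffOn i j).contDiffAt (hU.mem_nhds hx)).comp (x, y) contDiffAt_fst
  refine ContDiffAt.sqrt (ContDiffAt.sum fun i _ => ContDiffAt.sum fun j _ =>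
    ((hcoef i j).mul (contDiffAt_snd_apply x y i)).mul (contDiffAt_snd_apply x y j)) ?_
  exact (Real.sqrt_pos.1 (alph_pos (ha.posDef x hx) hy)).ne'

lemma gmatF_alph (ha : IsRiemannianMetric U a) (hx : x ∈ U) (y : Fin n → ℝ) :
    gmatF (fun z => alph (a z)) x y = a x := by
  ext i j
  exact fundT_alph (ha.posDef x hx) y i j

lemma isFinslerMetric_alph (ha : IsRiemannianMetric U a) (hU : IsOpen U) :
    IsFinslerMetric U fun z => alph (a z) where
  contDiffAt _ hx _ hy := ha.contDiffAt_uncurry_alph hU hx hy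
  posHomogeneous x _ := posHomogeneous_alph (a x)
  pos x hx _ hy := alph_pos (ha.posDef x hx) hy
  posDef x hx y _ := by simpa only [ha.gmatF_alph hx y] using ha.posDef x hx

lemma sprayF_alph (ha : IsRiemannianMetric U a) (hU : IsOpen U) (hx : x ∈ U) (y : Fin n → ℝ) :
    sprayF (fun z => alph (a z)) x y = alphaG a x y := by
  have hpd (i j k : Fin n) : pd (fun z => gmatF (fun z => alph (a z)) z y i j) x k =
      pd (fun z => a z i j) x k := by
    refine pd_congr_of_eventuallyEq ?_ k
    filter_upwards [hU.mem_nhds hx] with z hz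
    rw [ha.gmatF_alph hz]
  have hsymm (j k l : Fin n) : pd (fun z => a z l k) x j = pd (fun z => a z k l) x j := by
    refine pd_congr_of_eventuallyEq ?_ j
    filter_upwards [hU.mem_nhds hx] with z hz using (posDef_isSymm (ha.posDef z hz)).apply k l
  ext i
  simp only [sprayF, alphaG, chr, ha.gmatF_alph hx, hpd, Finset.mul_sum, Finset.sum_mul]
  rw [Finset.sum_comm]
  refine Finset.sum_congr rfl fun j _ => ?_
  rw [Finset.sum_comm]
  refine Finset.sum_congr rfl fun k _ => Finset.sum_congr rfl fun l _ => ?_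
  rw [hsymm j k l]
  ring

end IsRiemannianMetric

end RiemannianMetric

section OneForm

variable {n : ℕ} {U : Set (Fin n → ℝ)} {a : (Fin n → ℝ) → Matrix (Fin n) (Fin n) ℝ}
  {v : (Fin n → ℝ) → Fin n → ℝ} {x y : Fin n → ℝ}

lemma sum_sum_covD_mul_mul (a : (Fin n → ℝ) → Matrix (Fin n) (Fin n) ℝ)
    (v : (Fin n → ℝ) → Fin n → ℝ) (x y : Fin n → ℝ) :
    ∑ i, ∑ j, covD a v x i j * y i * y j =
      ∑ i, fderiv ℝ (fun z => v z i) x y * y i - 2 * oneForm (v x) (alphaG a x y) := by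
  have hconn : 2 * oneForm (v x) (alphaG a x y) =
      ∑ i, ∑ j, (∑ k, v x k * chr a x k i j) * y i * y j := by
    simp only [oneForm, alphaG, Finset.mul_sum, Finset.sum_mul]
    rw [Finset.sum_comm]
    refine Finset.sum_congr rfl fun i _ => ?_
    rw [Finset.sum_comm]
    exact Finset.sum_congr rfl fun j _ => Finset.sum_congr rfl fun k _ => by ring
  have hcoord (i : Fin n) : fderiv ℝ (fun z => v z i) x y * y i =
      ∑ j, pd (fun z => v z i) x j * y j * y i := by rw [← sum_pd_mul, Finset.sum_mul]
  simp only [hconn, hcoord, ← Finset.sum_sub_distrib, covD]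
  exact Finset.sum_congr rfl fun i _ => Finset.sum_congr rfl fun j _ => by ring

lemma r00_eq_sum_sum_covD (a : (Fin n → ℝ) → Matrix (Fin n) (Fin n) ℝ)
    (v : (Fin n → ℝ) → Fin n → ℝ) (x y : Fin n → ℝ) :
    r00 a v x y = ∑ i, ∑ j, covD a v x i j * y i * y j := by
  have hswap : ∑ i, ∑ j, covD a v x j i * y i * y j = ∑ i, ∑ j, covD a v x i j * y i * y j := by
    rw [Finset.sum_comm]
    exact Finset.sum_congr rfl fun i _ => Finset.sum_congr rfl fun j _ => by ring
  simp only [r00, rSym, mul_add, add_mul, Finset.sum_add_distrib, mul_assoc, ← Finset.mul_sum]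
  simp only [← mul_assoc, hswap]
  ring

lemma fderiv_oneForm (b y : Fin n → ℝ) : fderiv ℝ (oneForm b) y = covector b :=
  (covector b).fderiv

lemma pd_oneForm (b y : Fin n → ℝ) (l : Fin n) : pd (oneForm b) y l = b l := by
  rw [pd, fderiv_oneForm]
  simp

lemma fderiv_oneForm_apply_right (hv : ∀ i, DifferentiableAt ℝ (fun z => v z i) x)
    (y w : Fin n → ℝ) :
    fderiv ℝ (fun z => oneForm (v z) y) x w = ∑ i, fderiv ℝ (fun z => v z i) x w * y i := by
  simp only [oneForm]
  rw [fderiv_fun_sum fun i _ => (hv i).mul_const (y i)]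
  simp [fderiv_mul_const (hv _), mul_comm]

lemma fderiv_oneForm_alphaG (hU : IsOpen U) (hv : ∀ i, ContDiffOn ℝ ∞ (fun x => v x i) U)
    (hx : x ∈ U) (y : Fin n → ℝ) :
    fderiv ℝ (uncurry fun z => oneForm (v z)) (x, y) (y, -(2 : ℝ) • alphaG a x y) =
      r00 a v x y := by
  have hd i := ((hv i).contDiffAt (hU.mem_nhds hx)).differentiableAt (by simp)
  rw [fderiv_uncurry_apply ((contDiffAt_uncurry_oneForm hU hv hx y).differentiableAt (by simp)),
    fderiv_oneForm_apply_right hd, fderiv_oneForm, r00_eq_sum_sum_covD, sum_sum_covD_mul_mul,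
    covector_apply, dotProduct_smul, smul_eq_mul, neg_mul, ← sub_eq_add_neg]
  rfl

lemma IsRiemannianMetric.chr_comm (ha : IsRiemannianMetric U a) (hU : IsOpen U) (hx : x ∈ U)
    (k i j : Fin n) : chr a x k i j = chr a x k j i := by
  have hsymm (l : Fin n) : pd (fun z => a z i j) x l = pd (fun z => a z j i) x l := by
    refine pd_congr_of_eventuallyEq ?_ l
    filter_upwards [hU.mem_nhds hx] with z hz using (posDef_isSymm (ha.posDef z hz)).apply j i
  simp only [chr, hsymm]
  congr 1
  exact Finset.sum_congr rfl fun l _ => by ring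

lemma IsRiemannianMetric.two_mul_sSym (ha : IsRiemannianMetric U a) (hU : IsOpen U) (hx : x ∈ U)
    (v : (Fin n → ℝ) → Fin n → ℝ) (i j : Fin n) :
    2 * sSym a v x i j = pd (fun z => v z i) x j - pd (fun z => v z j) x i := by
  simp only [sSym, covD, ha.chr_comm hU hx _ j i]
  ring

lemma IsRiemannianMetric.eulerLagrange_oneForm (ha : IsRiemannianMetric U a) (hU : IsOpen U)
    (hv : ∀ i, ContDiffOn ℝ ∞ (fun x => v x i) U) (hx : x ∈ U) (y w : Fin n → ℝ) (l : Fin n) :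
    eulerLagrange (fun z => oneForm (v z)) x y w l = 2 * s0low a v x y l := by
  have hd i := ((hv i).contDiffAt (hU.mem_nhds hx)).differentiableAt (by simp)
  have hvpd : uncurry (vpd (fun z => oneForm (v z)) l) = (fun z => v z l) ∘ Prod.fst :=
    funext fun p => pd_oneForm (v p.1) p.2 l
  have hderiv : fderiv ℝ ((fun z => v z l) ∘ Prod.fst) (x, y) (y, w) =
      fderiv ℝ (fun z => v z l) x y := by
    rw [fderiv_comp (x, y) (hd l) differentiableAt_fst, fderiv_fst]
    simp
  rw [eulerLagrange, hvpd, hderiv, pd, fderiv_oneForm_apply_right hd, ← sum_pd_mul, s0low,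
    Finset.mul_sum, ← Finset.sum_sub_distrib]
  refine Finset.sum_congr rfl fun k _ => ?_
  rw [← mul_assoc, ha.two_mul_sSym hU hx, sub_mul]
  rfl

end OneForm

section ChainRule

/-- The ordinate `φ(s) - s φ'(s)` at `0` of the tangent line to the graph of `φ` at `s`. -/
def tangentIntercept (φ : ℝ → ℝ) (s : ℝ) : ℝ := φ s - s * deriv φ s

section Normed

variable {E : Type*} [NormedAddCommGroup E] [NormedSpace ℝ E] {φ : ℝ → ℝ} {f g s : E → ℝ} {p : E}

lemma hasFDerivAt_div (hf : DifferentiableAt ℝ f p) (hg : DifferentiableAt ℝ g p)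
    (hne : g p ≠ 0) :
    HasFDerivAt (fun q => f q / g q)
      ((g p)⁻¹ • (fderiv ℝ f p - (f p / g p) • fderiv ℝ g p)) p := by
  simp only [div_eq_mul_inv]
  refine (hf.hasFDerivAt.mul
    ((hasDerivAt_inv hne).comp_hasFDerivAt p hg.hasFDerivAt)).congr_fderiv ?_
  ext v
  simp only [add_apply, smul_apply, sub_apply, smul_eq_mul, comp_apply]
  field_simp
  ring

lemma fderiv_mul_comp_div (hφ : Differentiable ℝ φ) (hf : DifferentiableAt ℝ f p)
    (hg : DifferentiableAt ℝ g p) (hne : g p ≠ 0) (v : E) :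
    fderiv ℝ (fun q => g q * φ (f q / g q)) p v =
      tangentIntercept φ (f p / g p) * fderiv ℝ g p v + deriv φ (f p / g p) * fderiv ℝ f p v := by
  have hmul : HasFDerivAt (fun q => g q * φ (f q / g q)) _ p := hg.hasFDerivAt.fun_mul
    ((hφ _).hasDerivAt.comp_hasFDerivAt p (hasFDerivAt_div hf hg hne))
  rw [hmul.fderiv]
  simp only [add_apply, smul_apply, sub_apply, smul_eq_mul, tangentIntercept]
  field_simp
  ring

lemma hasDerivAt_tangentIntercept (hφ : Differentiable ℝ φ) (hφ' : Differentiable ℝ (deriv φ))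
    (t : ℝ) : HasDerivAt (tangentIntercept φ) (-t * deriv (deriv φ) t) t := by
  have h : HasDerivAt (fun t => φ t - t * deriv φ t) _ t :=
    (hφ t).hasDerivAt.fun_sub ((hasDerivAt_id t).mul (hφ' t).hasDerivAt)
  refine h.congr_deriv ?_
  simp

lemma fderiv_tangentIntercept_mul_add (hφ : Differentiable ℝ φ) (hφ' : Differentiable ℝ (deriv φ))
    (hs : DifferentiableAt ℝ s p) (hf : DifferentiableAt ℝ f p) (hg : DifferentiableAt ℝ g p)
    (v : E) :
    fderiv ℝ (fun q => tangentIntercept φ (s q) * g q + deriv φ (s q) * f q) p v =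
      deriv (deriv φ) (s p) * (f p - s p * g p) * fderiv ℝ s p v
        + tangentIntercept φ (s p) * fderiv ℝ g p v + deriv φ (s p) * fderiv ℝ f p v := by
  have hsum : HasFDerivAt (fun q => tangentIntercept φ (s q) * g q + deriv φ (s q) * f q) _ p :=
    (((hasDerivAt_tangentIntercept hφ hφ' _).comp_hasFDerivAt p hs.hasFDerivAt).fun_mul
      hg.hasFDerivAt).fun_add
      (((hφ' _).hasDerivAt.comp_hasFDerivAt p hs.hasFDerivAt).fun_mul hf.hasFDerivAt)
  rw [hsum.fderiv]
  simp only [add_apply, smul_apply, smul_eq_mul, comp_apply]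
  ring

end Normed

section Lagrangian

variable {n : ℕ} {φ : ℝ → ℝ} {K L : (Fin n → ℝ) → (Fin n → ℝ) → ℝ} {x y : Fin n → ℝ}

lemma eulerLagrange_add (hK : ContDiffAt ℝ ∞ (uncurry K) (x, y))
    (hL : ContDiffAt ℝ ∞ (uncurry L) (x, y)) (v : Fin n → ℝ) (l : Fin n) :
    eulerLagrange (fun z w => K z w + L z w) x y v l =
      eulerLagrange K x y v l + eulerLagrange L x y v l := by
  have hvpd : uncurry (vpd (fun z w => K z w + L z w) l) =ᶠ[𝓝 (x, y)]
      fun p => uncurry (vpd K l) p + uncurry (vpd L l) p := by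
    filter_upwards [eventually_differentiableAt_section hK,
      eventually_differentiableAt_section hL] with p hKp hLp
    simp [uncurry, vpd, pd, fderiv_fun_add hKp hLp]
  have hd := (contDiffAt_uncurry_vpd hK l).differentiableAt (by simp)
  have hd' := (contDiffAt_uncurry_vpd hL l).differentiableAt (by simp)
  simp only [eulerLagrange, hvpd.fderiv_eq, fderiv_fun_add hd hd', pd,
    fderiv_fun_add (differentiableAt_section_left hK) (differentiableAt_section_left hL),
    add_apply]
  ring

lemma eulerLagrange_mul_comp_div (hφ : Differentiable ℝ φ) (hφ' : Differentiable ℝ (deriv φ))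
    (hK : ContDiffAt ℝ ∞ (uncurry K) (x, y)) (hL : ContDiffAt ℝ ∞ (uncurry L) (x, y))
    (hne : L x y ≠ 0) (v : Fin n → ℝ) (l : Fin n) :
    eulerLagrange (fun z w => L z w * φ (K z w / L z w)) x y v l =
      deriv (deriv φ) (K x y / L x y) * (vpd K l x y - K x y / L x y * vpd L l x y) *
          fderiv ℝ (fun p => uncurry K p / uncurry L p) (x, y) (y, v)
        + tangentIntercept φ (K x y / L x y) * eulerLagrange L x y v l
        + deriv φ (K x y / L x y) * eulerLagrange K x y v l := by
  have hvpd : uncurry (vpd (fun z w => L z w * φ (K z w / L z w)) l) =ᶠ[𝓝 (x, y)]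
      fun p => tangentIntercept φ (uncurry K p / uncurry L p) * uncurry (vpd L l) p
        + deriv φ (uncurry K p / uncurry L p) * uncurry (vpd K l) p := by
    filter_upwards [eventually_differentiableAt_section hK,
      eventually_differentiableAt_section hL, hL.continuousAt.eventually_ne hne] with p hKp hLp hp
    exact fderiv_mul_comp_div hφ hKp hLp hp _
  have hdiv := (hasFDerivAt_div (hK.differentiableAt (by simp)) (hL.differentiableAt (by simp))
    hne).differentiableAt
  rw [eulerLagrange, hvpd.fderiv_eq, fderiv_tangentIntercept_mul_add hφ hφ' hdiv
    ((contDiffAt_uncurry_vpd hK l).differentiableAt (by simp))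
    ((contDiffAt_uncurry_vpd hL l).differentiableAt (by simp)), pd,
    fderiv_mul_comp_div hφ (differentiableAt_section_left hK) (differentiableAt_section_left hL)
      hne]
  simp only [eulerLagrange, pd, uncurry_apply_pair]
  ring

end Lagrangian

end ChainRule

section AbgMetric

variable {n : ℕ} {U : Set (Fin n → ℝ)} {a : (Fin n → ℝ) → Matrix (Fin n) (Fin n) ℝ}
  {b g : (Fin n → ℝ) → Fin n → ℝ} {φ : ℝ → ℝ} {x y : Fin n → ℝ}

/-- The metric `F = α φ(β/α) + γ`, of which `φ = exp` is the case of interest. -/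
def abgMetric (φ : ℝ → ℝ) (a : (Fin n → ℝ) → Matrix (Fin n) (Fin n) ℝ)
    (b g : (Fin n → ℝ) → Fin n → ℝ) (x y : Fin n → ℝ) : ℝ :=
  alph (a x) y * φ (oneForm (b x) y / alph (a x) y) + oneForm (g x) y

lemma hl_eq {A : Matrix (Fin n) (Fin n) ℝ} (hA : A.PosDef) (hy : y ≠ 0) (v : Fin n → ℝ) :
    hl A v y = v - (sVar A v y / alph A y) • (A *ᵥ y) := by
  ext l
  simp only [hl, pd_alph hA hy, Pi.sub_apply, Pi.smul_apply, smul_eq_mul]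
  ring

namespace IsRiemannianMetric

lemma contDiffAt_uncurry_abgMetric (ha : IsRiemannianMetric U a) (hU : IsOpen U)
    (hb : ∀ i, ContDiffOn ℝ ∞ (fun x => b x i) U) (hg : ∀ i, ContDiffOn ℝ ∞ (fun x => g x i) U)
    (hφ : ContDiff ℝ ∞ φ) (hx : x ∈ U) (hy : y ≠ 0) :
    ContDiffAt ℝ ∞ (uncurry (abgMetric φ a b g)) (x, y) := by
  have hα := ha.contDiffAt_uncurry_alph hU hx hy
  have hs := (contDiffAt_uncurry_oneForm hU hb hx y).div hα (alph_pos (ha.posDef x hx) hy).ne'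
  exact (hα.mul (hφ.contDiffAt.comp (x, y) hs)).add (contDiffAt_uncurry_oneForm hU hg hx y)

lemma eulerLagrange_abgMetric (ha : IsRiemannianMetric U a) (hU : IsOpen U)
    (hb : ∀ i, ContDiffOn ℝ ∞ (fun x => b x i) U) (hg : ∀ i, ContDiffOn ℝ ∞ (fun x => g x i) U)
    (hφ : ContDiff ℝ ∞ φ) (hx : x ∈ U) (hy : y ≠ 0) (v : Fin n → ℝ) (l : Fin n) :
    eulerLagrange (abgMetric φ a b g) x y v l =
      deriv (deriv φ) (sVar (a x) (b x) y) * hl (a x) (b x) y l *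
          ((fderiv ℝ (uncurry fun z => oneForm (b z)) (x, y) (y, v)
            - sVar (a x) (b x) y * fderiv ℝ (uncurry fun z => alph (a z)) (x, y) (y, v))
              / alph (a x) y)
        + tangentIntercept φ (sVar (a x) (b x) y) * eulerLagrange (fun z => alph (a z)) x y v l
        + deriv φ (sVar (a x) (b x) y) * (2 * s0low a b x y l) + 2 * s0low a g x y l := by
  have hα := ha.contDiffAt_uncurry_alph hU hx hy
  have hβ := contDiffAt_uncurry_oneForm hU hb hx y
  have hne := (alph_pos (ha.posDef x hx) hy).ne'
  have hφ' := (contDiff_infty_iff_deriv.1 hφ).2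
  have hαφ : ContDiffAt ℝ ∞ (uncurry fun z w => alph (a z) w * φ (oneForm (b z) w / alph (a z) w))
      (x, y) := hα.mul (hφ.contDiffAt.comp (x, y) (hβ.div hα hne))
  have hdiv := hasFDerivAt_div (hβ.differentiableAt (by simp)) (hα.differentiableAt (by simp)) hne
  unfold abgMetric
  rw [eulerLagrange_add hαφ (contDiffAt_uncurry_oneForm hU hg hx y),
    eulerLagrange_mul_comp_div (hφ.differentiable (by simp)) (hφ'.differentiable (by simp)) hβ hα
      hne, ha.eulerLagrange_oneForm hU hb hx, ha.eulerLagrange_oneForm hU hg hx, hdiv.fderiv,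
    smul_apply, sub_apply, smul_apply, smul_eq_mul, smul_eq_mul, inv_mul_eq_div, vpd,
    pd_oneForm]
  rfl

lemma eulerLagrange_abgMetric_alphaG (ha : IsRiemannianMetric U a) (hU : IsOpen U)
    (hb : ∀ i, ContDiffOn ℝ ∞ (fun x => b x i) U) (hg : ∀ i, ContDiffOn ℝ ∞ (fun x => g x i) U)
    (hφ : ContDiff ℝ ∞ φ) (hx : x ∈ U) (hy : y ≠ 0) (l : Fin n) :
    eulerLagrange (abgMetric φ a b g) x y (-(2 : ℝ) • alphaG a x y) l =
      deriv (deriv φ) (sVar (a x) (b x) y) * hl (a x) (b x) y l * (r00 a b x y / alph (a x) y)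
        + deriv φ (sVar (a x) (b x) y) * (2 * s0low a b x y l) + 2 * s0low a g x y l := by
  have hα := ha.isFinslerMetric_alph hU
  rw [ha.eulerLagrange_abgMetric hU hb hg hφ hx hy, fderiv_oneForm_alphaG hU hb hx,
    ← ha.sprayF_alph hU hx y, hα.fderiv_sprayF hU hx hy, hα.eulerLagrange_sprayF hU hx hy]
  ring

lemma fderiv_vpd_abgMetric (ha : IsRiemannianMetric U a) (hU : IsOpen U)
    (hb : ∀ i, ContDiffOn ℝ ∞ (fun x => b x i) U) (hg : ∀ i, ContDiffOn ℝ ∞ (fun x => g x i) U)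
    (hφ : ContDiff ℝ ∞ φ) (hx : x ∈ U) (hy : y ≠ 0) (v : Fin n → ℝ) (l : Fin n) :
    fderiv ℝ (vpd (abgMetric φ a b g) l x) y v =
      deriv (deriv φ) (sVar (a x) (b x) y) * hl (a x) (b x) y l *
          (hl (a x) (b x) y ⬝ᵥ v / alph (a x) y)
        + tangentIntercept φ (sVar (a x) (b x) y) *
          fderiv ℝ (fun z => pd (alph (a x)) z l) y v := by
  have hα := ha.contDiffAt_uncurry_alph hU hx hy
  have hβ := contDiffAt_uncurry_oneForm hU hb hx y
  have hsplit := eulerLagrange_eq_add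
    (ha.contDiffAt_uncurry_abgMetric hU hb hg hφ hx hy) v l
  simp only [ha.eulerLagrange_abgMetric hU hb hg hφ hx hy, eulerLagrange_eq_add hα v,
    fderiv_uncurry_apply (hα.differentiableAt (by simp)),
    fderiv_uncurry_apply (hβ.differentiableAt (by simp)), map_zero, fderiv_oneForm,
    (hasFDerivAt_alph (ha.posDef x hx) hy).fderiv, smul_apply, covector_apply, smul_eq_mul]
    at hsplit
  have hcontract : hl (a x) (b x) y ⬝ᵥ v =
      b x ⬝ᵥ v - sVar (a x) (b x) y / alph (a x) y * ((a x *ᵥ y) ⬝ᵥ v) := by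
    rw [hl_eq (ha.posDef x hx) hy, sub_dotProduct, smul_dotProduct, smul_eq_mul]
  rw [hcontract]
  change _ = _ + _ * fderiv ℝ (vpd (fun z => alph (a z)) l x) y v
  linear_combination -hsplit

end IsRiemannianMetric

/-- `|y|² v - ⟨y, v⟩ y`: up to the factor `|y|²`, the component of `v` orthogonal to `y` for the
inner product `A`. The factor keeps it polynomial in `y` whenever `v` is. -/
def orthoPart (A : Matrix (Fin n) (Fin n) ℝ) (y v : Fin n → ℝ) : Fin n → ℝ :=
  (y ⬝ᵥ A *ᵥ y) • v - ((A *ᵥ y) ⬝ᵥ v) • y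

lemma mulVec_orthoPart {A : Matrix (Fin n) (Fin n) ℝ} (hA : A.PosDef) (hy : y ≠ 0)
    (v : Fin n → ℝ) (l : Fin n) :
    (A *ᵥ orthoPart A y v) l = alph A y ^ 3 * fderiv ℝ (fun z => pd (alph A) z l) y v := by
  have hne := (alph_pos hA hy).ne'
  simp only [fderiv_pd_alph hA hy, orthoPart, ← alph_sq hA, Matrix.mulVec_sub, Matrix.mulVec_smul,
    Pi.sub_apply, Pi.smul_apply, smul_eq_mul]
  field_simp

lemma dotProduct_orthoPart {A : Matrix (Fin n) (Fin n) ℝ} (hA : A.PosDef) (hy : y ≠ 0)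
    (b v : Fin n → ℝ) : b ⬝ᵥ orthoPart A y v = alph A y ^ 2 * (hl A b y ⬝ᵥ v) := by
  have hne := (alph_pos hA hy).ne'
  have hs : sVar A b y = b ⬝ᵥ y / alph A y := rfl
  simp only [hl_eq hA hy, orthoPart, ← alph_sq hA, dotProduct_sub, sub_dotProduct, smul_dotProduct,
    dotProduct_smul, smul_eq_mul, hs]
  field_simp

lemma IsRiemannianMetric.orthoPart_sprayF_sub (ha : IsRiemannianMetric U a) (hU : IsOpen U)
    (hb : ∀ i, ContDiffOn ℝ ∞ (fun x => b x i) U) (hg : ∀ i, ContDiffOn ℝ ∞ (fun x => g x i) U)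
    (hφ : ContDiff ℝ ∞ φ) (hF : IsFinslerMetric U (abgMetric φ a b g)) (hx : x ∈ U) (hy : y ≠ 0)
    {W : Fin n → ℝ}
    (hW : W = orthoPart (a x) y (sprayF (abgMetric φ a b g) x y - alphaG a x y)) (l : Fin n) :
    2 * (deriv (deriv φ) (sVar (a x) (b x) y) * hl (a x) (b x) y l * (b x ⬝ᵥ W)
        + tangentIntercept φ (sVar (a x) (b x) y) * (a x *ᵥ W) l) =
      deriv (deriv φ) (sVar (a x) (b x) y) * hl (a x) (b x) y l * alph (a x) y ^ 2 * r00 a b x y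
        + 2 * alph (a x) y ^ 3 *
          (deriv φ (sVar (a x) (b x) y) * s0low a b x y l + s0low a g x y l) := by
  have hne := (alph_pos (ha.posDef x hx) hy).ne'
  have hspray : -(2 : ℝ) • sprayF (abgMetric φ a b g) x y = -(2 : ℝ) • alphaG a x y
      + -(2 : ℝ) • (sprayF (abgMetric φ a b g) x y - alphaG a x y) := by module
  have hEL := hF.eulerLagrange_sprayF hU hx hy l
  have hadd (v w : Fin n → ℝ) : eulerLagrange (abgMetric φ a b g) x y (v + w) l =
      eulerLagrange (abgMetric φ a b g) x y v l
        + fderiv ℝ (vpd (abgMetric φ a b g) l x) y w := by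
    have hFs := hF.contDiffAt x hx y hy
    rw [eulerLagrange_eq_add hFs, eulerLagrange_eq_add hFs v, map_add, add_assoc]
  rw [hspray, hadd, ha.eulerLagrange_abgMetric_alphaG hU hb hg hφ hx hy, map_smul,
    ha.fderiv_vpd_abgMetric hU hb hg hφ hx hy, smul_eq_mul] at hEL
  rw [hW, mulVec_orthoPart (ha.posDef x hx) hy, dotProduct_orthoPart (ha.posDef x hx) hy]
  field_simp at hEL
  linear_combination -(alph (a x) y ^ 2) * hEL

end AbgMetric

section PositiveDefiniteness

variable {n : ℕ} {F : (Fin n → ℝ) → (Fin n → ℝ) → ℝ} {x y : Fin n → ℝ}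
  {A : Matrix (Fin n) (Fin n) ℝ}

lemma gmatF_mulVec (h : ContDiffAt ℝ ∞ (uncurry F) (x, y)) (v : Fin n → ℝ) (l : Fin n) :
    (gmatF F x y *ᵥ v) l =
      F x y * fderiv ℝ (vpd F l x) y v + fderiv ℝ (F x) y v * vpd F l x y := by
  have hsq : ContDiffAt ℝ ∞ (uncurry fun z w => F z w ^ 2) (x, y) := h.pow 2
  have hd := h.differentiableAt (by simp)
  have hEL := eulerLagrange_sq h v l
  rw [eulerLagrange_eq_add hsq, eulerLagrange_eq_add h v, fderiv_vpd_sq (contDiffAt_section h),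
    eulerLagrange_sq h 0, fderiv_uncurry_apply hd, fderiv_uncurry_apply hd, map_zero] at hEL
  linear_combination 1 / 2 * hEL

lemma posDef_gmatF (h : ContDiffAt ℝ ∞ (uncurry F) (x, y)) (hhom : PosHomogeneous 1 (F x))
    (hy : y ≠ 0) (hpos : 0 < F x y)
    (hconv : ∀ v, LinearIndependent ℝ ![y, v] → 0 < ∑ l, fderiv ℝ (vpd F l x) y v * v l) :
    (gmatF F x y).PosDef := by
  have hsymm := gmatF_isSymm (contDiffAt_section h)
  have hd : DifferentiableAt ℝ (F x) y := (contDiffAt_section h).differentiableAt (by simp)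
  have hquad (v : Fin n → ℝ) : v ⬝ᵥ gmatF F x y *ᵥ v =
      F x y * ∑ l, fderiv ℝ (vpd F l x) y v * v l + fderiv ℝ (F x) y v ^ 2 := by
    rw [sq, ← sum_pd_mul (F x) y v, Finset.mul_sum, Finset.mul_sum, ← Finset.sum_add_distrib,
      dotProduct]
    refine Finset.sum_congr rfl fun l _ => ?_
    rw [gmatF_mulVec h, sum_pd_mul, vpd]
    ring
  refine Matrix.PosDef.of_dotProduct_mulVec_pos (Matrix.isHermitian_iff_isSymm.2 hsymm)
    fun v hv => ?_
  rw [star_trivial, hquad]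
  by_cases hind : LinearIndependent ℝ ![y, v]
  · have := hconv v hind
    positivity
  · obtain ⟨t, rfl⟩ : ∃ t : ℝ, t • y = v := by
      simpa [LinearIndependent.pair_iff' hy] using hind
    have ht : t ≠ 0 := by rintro rfl; simp at hv
    have hradial (l : Fin n) : fderiv ℝ (vpd F l x) y y = 0 := by
      have hvd := (contDiffAt_section (contDiffAt_uncurry_vpd h l)).differentiableAt
        (by simp)
      exact ((hhom.pd l).fderiv_apply_self hvd).trans (by simp)
    simp only [map_smul, hradial, hhom.fderiv_apply_self hd, smul_eq_mul, mul_zero, zero_mul,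
      Finset.sum_const_zero, zero_add, Nat.cast_one, one_mul]
    positivity

lemma toBilin'_isSymm (hA : A.IsSymm) : LinearMap.IsSymm (Matrix.toBilin' A) := by
  refine ⟨fun u v => ?_⟩
  simp only [Matrix.toBilin'_apply', RingHom.id_apply]
  rw [dotProduct_mulVec_of_isSymm hA, dotProduct_comm]

lemma sq_dotProduct_mulVec_lt (hA : A.PosDef) {v : Fin n → ℝ}
    (hind : LinearIndependent ℝ ![y, v]) :
    (y ⬝ᵥ A *ᵥ v) ^ 2 < (y ⬝ᵥ A *ᵥ y) * (v ⬝ᵥ A *ᵥ v) := by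
  simpa only [Matrix.toBilin'_apply'] using
    (LinearMap.BilinForm.apply_sq_lt_iff_linearIndependent_of_symm (Matrix.toBilin' A)
      (fun u hu => by simpa [Matrix.toBilin'_apply'] using hA.dotProduct_mulVec_pos hu)
      (toBilin'_isSymm (posDef_isSymm hA)) y v).2 hind

lemma sum_fderiv_pd_alph_mul_pos (hA : A.PosDef) (hy : y ≠ 0) {v : Fin n → ℝ}
    (hind : LinearIndependent ℝ ![y, v]) :
    0 < ∑ l, fderiv ℝ (fun z => pd (alph A) z l) y v * v l := by
  have hα := alph_pos hA hy
  have hsum : ∑ l, fderiv ℝ (fun z => pd (alph A) z l) y v * v l =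
      ((y ⬝ᵥ A *ᵥ y) * (v ⬝ᵥ A *ᵥ v) - (y ⬝ᵥ A *ᵥ v) ^ 2) / alph A y ^ 3 := by
    have hterm (l : Fin n) : fderiv ℝ (fun z => pd (alph A) z l) y v * v l =
        (v l * (A *ᵥ v) l) / alph A y - ((A *ᵥ y) l * v l) * ((A *ᵥ y) ⬝ᵥ v) / alph A y ^ 3 := by
      rw [fderiv_pd_alph hA hy]
      field_simp
    simp only [hterm, Finset.sum_sub_distrib, ← Finset.sum_div, ← Finset.sum_mul]
    change v ⬝ᵥ A *ᵥ v / _ - ((A *ᵥ y) ⬝ᵥ v) * ((A *ᵥ y) ⬝ᵥ v) / _ = _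
    rw [dotProduct_mulVec_of_isSymm (posDef_isSymm hA) y v, ← alph_sq hA y]
    field_simp
  rw [hsum]
  exact div_pos (sub_pos.2 (sq_dotProduct_mulVec_lt hA hind)) (by positivity)

end PositiveDefiniteness

section Finsler

variable {n : ℕ} {U : Set (Fin n → ℝ)} {a : (Fin n → ℝ) → Matrix (Fin n) (Fin n) ℝ}
  {b g : (Fin n → ℝ) → Fin n → ℝ} {φ : ℝ → ℝ} {x y : Fin n → ℝ} {A : Matrix (Fin n) (Fin n) ℝ}

lemma posHomogeneous_oneForm (b : Fin n → ℝ) : PosHomogeneous 1 (oneForm b) := fun t _ y => by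
  simp [oneForm, Finset.mul_sum, mul_left_comm]

lemma posHomogeneous_abgMetric (φ : ℝ → ℝ) (a : (Fin n → ℝ) → Matrix (Fin n) (Fin n) ℝ)
    (b g : (Fin n → ℝ) → Fin n → ℝ) (x : Fin n → ℝ) :
    PosHomogeneous 1 (abgMetric φ a b g x) := fun t ht y => by
  simp only [abgMetric, posHomogeneous_alph _ t ht y, posHomogeneous_oneForm _ t ht y, pow_one,
    mul_div_mul_left _ _ ht.ne']
  ring

lemma IsRiemannianMetric.isFinslerMetric_abgMetric (ha : IsRiemannianMetric U a) (hU : IsOpen U)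
    (hb : ∀ i, ContDiffOn ℝ ∞ (fun x => b x i) U) (hg : ∀ i, ContDiffOn ℝ ∞ (fun x => g x i) U)
    (hφ : ContDiff ℝ ∞ φ) (hpos : ∀ x ∈ U, ∀ y ≠ 0, 0 < abgMetric φ a b g x y)
    (hint : ∀ x ∈ U, ∀ y ≠ 0, 0 < tangentIntercept φ (sVar (a x) (b x) y))
    (hconv : ∀ x ∈ U, ∀ y ≠ 0, 0 ≤ deriv (deriv φ) (sVar (a x) (b x) y)) :
    IsFinslerMetric U (abgMetric φ a b g) where
  contDiffAt _ hx _ hy := ha.contDiffAt_uncurry_abgMetric hU hb hg hφ hx hy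
  posHomogeneous x _ := posHomogeneous_abgMetric φ a b g x
  pos := hpos
  posDef x hx y hy := by
    refine posDef_gmatF (ha.contDiffAt_uncurry_abgMetric hU hb hg hφ hx hy)
      (posHomogeneous_abgMetric φ a b g x) hy (hpos x hx y hy) fun v hv => ?_
    have hα := alph_pos (ha.posDef x hx) hy
    have hsum : ∑ l, fderiv ℝ (vpd (abgMetric φ a b g) l x) y v * v l =
        deriv (deriv φ) (sVar (a x) (b x) y) * (hl (a x) (b x) y ⬝ᵥ v) ^ 2 / alph (a x) y
          + tangentIntercept φ (sVar (a x) (b x) y) *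
            ∑ l, fderiv ℝ (fun z => pd (alph (a x)) z l) y v * v l := by
      have hsq : (hl (a x) (b x) y ⬝ᵥ v) ^ 2 = ∑ l, hl (a x) (b x) y l * v l *
          (hl (a x) (b x) y ⬝ᵥ v) := by rw [← Finset.sum_mul, sq]; rfl
      rw [hsq, Finset.mul_sum, Finset.sum_div, Finset.mul_sum, ← Finset.sum_add_distrib]
      refine Finset.sum_congr rfl fun l _ => ?_
      rw [ha.fderiv_vpd_abgMetric hU hb hg hφ hx hy]
      ring
    have := sum_fderiv_pd_alph_mul_pos (ha.posDef x hx) hy hv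
    have := hint x hx y hy
    have := hconv x hx y hy
    rw [hsum]
    positivity

lemma quadInv_eq (A : Matrix (Fin n) (Fin n) ℝ) (u v : Fin n → ℝ) :
    quadInv A u v = u ⬝ᵥ A⁻¹ *ᵥ v := by
  simp only [quadInv, dotProduct, Matrix.mulVec, Finset.mul_sum]
  exact Finset.sum_congr rfl fun i _ => Finset.sum_congr rfl fun j _ => by ring

lemma mulVec_inv_mulVec (hA : A.PosDef) (b : Fin n → ℝ) : A *ᵥ A⁻¹ *ᵥ b = b := by
  rw [Matrix.mulVec_mulVec, Matrix.mul_nonsing_inv _ hA.det_pos.ne'.isUnit, Matrix.one_mulVec]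

lemma abs_oneForm_le (hA : A.PosDef) (b y : Fin n → ℝ) :
    |oneForm b y| ≤ √(quadInv A b b) * alph A y := by
  have hcs := LinearMap.BilinForm.apply_sq_le_of_symm (Matrix.toBilin' A)
    (fun u => by simpa [Matrix.toBilin'_apply'] using hA.posSemidef.dotProduct_mulVec_nonneg u)
    (toBilin'_isSymm (posDef_isSymm hA)) y (A⁻¹ *ᵥ b)
  simp only [Matrix.toBilin'_apply', mulVec_inv_mulVec hA] at hcs
  rw [alph_eq_sqrt, quadInv_eq, dotProduct_comm b, ← Real.sqrt_mul' _
    (by simpa using hA.posSemidef.dotProduct_mulVec_nonneg y)]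
  refine Real.abs_le_sqrt ?_
  rw [mul_comm]
  change (b ⬝ᵥ y) ^ 2 ≤ _
  rwa [dotProduct_comm]

lemma abs_sVar_lt_one (hA : A.PosDef) {b : Fin n → ℝ} (hb : √(quadInv A b b) < 1) (hy : y ≠ 0) :
    |sVar A b y| < 1 := by
  have hα := alph_pos hA hy
  rw [sVar, abs_div, abs_of_pos hα, div_lt_one hα]
  nlinarith [abs_oneForm_le hA b y]

lemma tangentIntercept_exp (s : ℝ) : tangentIntercept Real.exp s = (1 - s) * Real.exp s := by
  rw [tangentIntercept, Real.deriv_exp]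
  ring

lemma IsRiemannianMetric.isFinslerMetric_abgMetric_exp (ha : IsRiemannianMetric U a)
    (hU : IsOpen U) (hb : ∀ i, ContDiffOn ℝ ∞ (fun x => b x i) U)
    (hg : ∀ i, ContDiffOn ℝ ∞ (fun x => g x i) U)
    (hb1 : ∀ x ∈ U, √(quadInv (a x) (b x) (b x)) < 1)
    (hg1 : ∀ x ∈ U, √(quadInv (a x) (g x) (g x)) < Real.exp (-1)) :
    IsFinslerMetric U (abgMetric Real.exp a b g) := by
  have hs x (hx : x ∈ U) y (hy : y ≠ 0) := abs_lt.1 (abs_sVar_lt_one (ha.posDef x hx) (hb1 x hx) hy)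
  refine ha.isFinslerMetric_abgMetric hU hb hg Real.contDiff_exp (fun x hx y hy => ?_)
    (fun x hx y hy => ?_) fun x _ y _ => ?_
  · have hα := alph_pos (ha.posDef x hx) hy
    have hexp : Real.exp (-1) < Real.exp (sVar (a x) (b x) y) := Real.exp_lt_exp.2 (hs x hx y hy).1
    have hγ := neg_le_of_abs_le (abs_oneForm_le (ha.posDef x hx) (g x) y)
    change 0 < alph (a x) y * Real.exp (sVar (a x) (b x) y) + oneForm (g x) y
    nlinarith [mul_lt_mul_of_pos_right (hg1 x hx) hα, mul_lt_mul_of_pos_right hexp hα]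
  · rw [tangentIntercept_exp]
    exact mul_pos (sub_pos.2 (hs x hx y hy).2) (Real.exp_pos _)
  · simpa only [Real.deriv_exp] using (Real.exp_pos _).le

end Finsler

section PolynomialFunctions

variable {n : ℕ}

/-- The polynomial functions on `ℝⁿ`, as a subalgebra of all functions, so that membership of
explicit expressions reduces to closure under the algebra operations. -/
def mvPolyFun (n : ℕ) : Subalgebra ℝ ((Fin n → ℝ) → ℝ) :=
  (MvPolynomial.aeval fun i y => y i : MvPolynomial (Fin n) ℝ →ₐ[ℝ] (Fin n → ℝ) → ℝ).range

lemma mem_mvPolyFun {f : (Fin n → ℝ) → ℝ} :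
    f ∈ mvPolyFun n ↔ ∃ P : MvPolynomial (Fin n) ℝ, ∀ y, MvPolynomial.eval y P = f y := by
  have haeval (P : MvPolynomial (Fin n) ℝ) (y : Fin n → ℝ) :
      MvPolynomial.aeval (fun i (y : Fin n → ℝ) => y i) P y = MvPolynomial.eval y P := by
    induction P using MvPolynomial.induction_on with
    | C c => simp
    | add P Q hP hQ => simp [hP, hQ]
    | mul_X P i hP => simp [hP]
  simp only [mvPolyFun, AlgHom.mem_range, funext_iff, haeval]

lemma eval_mem_mvPolyFun (P : MvPolynomial (Fin n) ℝ) :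
    (fun y => MvPolynomial.eval y P) ∈ mvPolyFun n := mem_mvPolyFun.2 ⟨P, fun _ => rfl⟩

lemma apply_mem_mvPolyFun (i : Fin n) : (fun y => y i) ∈ mvPolyFun n :=
  mem_mvPolyFun.2 ⟨MvPolynomial.X i, fun _ => MvPolynomial.eval_X i⟩

lemma const_mem_mvPolyFun (c : ℝ) : (fun _ => c) ∈ mvPolyFun n := (mvPolyFun n).algebraMap_mem c

lemma sum_mul_mem_mvPolyFun {u v : (Fin n → ℝ) → Fin n → ℝ} (hu : ∀ i, (u · i) ∈ mvPolyFun n)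
    (hv : ∀ i, (v · i) ∈ mvPolyFun n) : (fun y => u y ⬝ᵥ v y) ∈ mvPolyFun n := by
  have hsum : (fun y => u y ⬝ᵥ v y) = ∑ i, (u · i) * (v · i) := by
    ext y; simp [dotProduct]
  exact hsum ▸ sum_mem fun i _ => mul_mem (hu i) (hv i)

lemma mulVec_mem_mvPolyFun (A : Matrix (Fin n) (Fin n) ℝ) {v : (Fin n → ℝ) → Fin n → ℝ}
    (hv : ∀ i, (v · i) ∈ mvPolyFun n) (i : Fin n) : (fun y => (A *ᵥ v y) i) ∈ mvPolyFun n :=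
  sum_mul_mem_mvPolyFun (fun j => const_mem_mvPolyFun (A i j)) hv

lemma linear_mem_mvPolyFun (c : Fin n → ℝ) : (fun y => c ⬝ᵥ y) ∈ mvPolyFun n :=
  sum_mul_mem_mvPolyFun (fun i => const_mem_mvPolyFun (c i)) apply_mem_mvPolyFun

lemma quadratic_mem_mvPolyFun (A : Matrix (Fin n) (Fin n) ℝ) :
    (fun y => y ⬝ᵥ A *ᵥ y) ∈ mvPolyFun n :=
  sum_mul_mem_mvPolyFun apply_mem_mvPolyFun (mulVec_mem_mvPolyFun A apply_mem_mvPolyFun)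

lemma eq_zero_or_eq_zero_of_mem_mvPolyFun {f g : (Fin n → ℝ) → ℝ} (hf : f ∈ mvPolyFun n)
    (hg : g ∈ mvPolyFun n) (h : ∀ y, f y * g y = 0) : f = 0 ∨ g = 0 := by
  obtain ⟨P, hP⟩ := mem_mvPolyFun.1 hf
  obtain ⟨Q, hQ⟩ := mem_mvPolyFun.1 hg
  have hPQ : P * Q = 0 := MvPolynomial.funext fun y => by simp [hP, hQ, h]
  refine (mul_eq_zero.1 hPQ).imp (fun hP0 => ?_) fun hQ0 => ?_ <;> ext y
  · simp [← hP, hP0]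
  · simp [← hQ, hQ0]

lemma exists_polynomial_on_circle {f : (Fin n → ℝ) → ℝ} (hf : f ∈ mvPolyFun n)
    (u v : Fin n → ℝ) : ∃ P Q : Polynomial ℝ, ∀ p q : ℝ, p ^ 2 + q ^ 2 = 1 →
      f (p • u + q • v) = P.eval p + q * Q.eval p := by
  obtain ⟨F, hF⟩ := mem_mvPolyFun.1 hf
  simp only [← hF]
  clear hF
  induction F using MvPolynomial.induction_on with
  | C c => exact ⟨Polynomial.C c, 0, by simp⟩
  | add F G hF hG =>
    obtain ⟨P, Q, hF⟩ := hF
    obtain ⟨P', Q', hG⟩ := hG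
    refine ⟨P + P', Q + Q', fun p q hpq => ?_⟩
    simp only [map_add, hF p q hpq, hG p q hpq, Polynomial.eval_add]
    ring
  | mul_X F i hF =>
    obtain ⟨P, Q, hF⟩ := hF
    refine ⟨P * (Polynomial.C (u i) * Polynomial.X)
        + Polynomial.C (v i) * (1 - Polynomial.X ^ 2) * Q,
      Polynomial.C (v i) * P + Polynomial.C (u i) * Polynomial.X * Q, fun p q hpq => ?_⟩
    simp only [map_mul, hF p q hpq, MvPolynomial.eval_X, Pi.add_apply, Pi.smul_apply, smul_eq_mul,
      Polynomial.eval_add, Polynomial.eval_sub, Polynomial.eval_mul, Polynomial.eval_pow,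
      Polynomial.eval_C, Polynomial.eval_X, Polynomial.eval_one]
    linear_combination (v i * Q.eval p) * hpq

end PolynomialFunctions

section Transcendence

variable {n : ℕ} {A : Matrix (Fin n) (Fin n) ℝ} {b c : Fin n → ℝ}

lemma eq_zero_of_forall_mul_cosh_eq_eval {B : Polynomial ℝ} {c κ : ℝ} (hκ : 0 < κ)
    (h : ∀ p, c * Real.cosh (κ * p) = B.eval p) : c = 0 := by
  have hdecay := Polynomial.tendsto_div_exp_atTop (B.comp (Polynomial.C κ⁻¹ * Polynomial.X))
  have hquot (t : ℝ) : (B.comp (Polynomial.C κ⁻¹ * Polynomial.X)).eval t / Real.exp t =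
      c * ((1 + Real.exp (-t) * Real.exp (-t)) / 2) := by
    simp only [Polynomial.eval_comp, Polynomial.eval_mul, Polynomial.eval_C, Polynomial.eval_X,
      ← h, mul_inv_cancel_left₀ hκ.ne', Real.cosh_eq, Real.exp_neg]
    field_simp
  have hlim : Tendsto (fun t => c * ((1 + Real.exp (-t) * Real.exp (-t)) / 2)) atTop
      (𝓝 (c * ((1 + 0 * 0) / 2))) :=
    (((Real.tendsto_exp_neg_atTop_nhds_zero.mul
      Real.tendsto_exp_neg_atTop_nhds_zero).const_add 1).div_const 2).const_mul c
  simp only [hquot] at hdecay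
  linarith [tendsto_nhds_unique hdecay hlim]

lemma eq_zero_of_mul_cosh_eq_eval_on_Ioo {B : Polynomial ℝ} {c κ : ℝ} (hκ : 0 < κ)
    (h : ∀ p ∈ Ioo (-1 : ℝ) 1, c * Real.cosh (κ * p) = B.eval p) : c = 0 := by
  have hcosh : AnalyticOnNhd ℝ (fun p => c * Real.cosh (κ * p)) univ := fun p _ => by
    simp only [Real.cosh_eq]
    fun_prop
  have heq := hcosh.eq_of_eventuallyEq (AnalyticOnNhd.eval_polynomial B) (z₀ := 0)
    (by filter_upwards [Ioo_mem_nhds (neg_one_lt_zero (R := ℝ)) one_pos] using h)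
  exact eq_zero_of_forall_mul_cosh_eq_eval hκ (congrFun heq)

lemma eq_zero_of_cosh_mul_eq_on_circle {P Q : Polynomial ℝ} {c d κ : ℝ} (hκ : 0 < κ)
    (h : ∀ p q : ℝ, p ^ 2 + q ^ 2 = 1 →
      Real.cosh (κ * p) * (p * c + q * d) = P.eval p + q * Q.eval p) : d = 0 := by
  refine eq_zero_of_mul_cosh_eq_eval_on_Ioo (B := Q) hκ fun p hp => ?_
  have hpos : 0 < 1 - p ^ 2 := by nlinarith [hp.1, hp.2]
  have hq := Real.sq_sqrt hpos.le
  have hplus := h p √(1 - p ^ 2) (by linarith)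
  have hminus := h p (-√(1 - p ^ 2)) (by linarith)
  refine mul_left_cancel₀ (Real.sqrt_pos.2 hpos).ne' ?_
  linear_combination (hplus - hminus) / 2

lemma alph_smul_inv_alph (hA : A.PosDef) {y : Fin n → ℝ} (hy : y ≠ 0) :
    alph A ((alph A y)⁻¹ • y) = 1 := by
  have hα := alph_pos hA hy
  rw [posHomogeneous_alph A _ (inv_pos.2 hα), pow_one, inv_mul_cancel₀ hα.ne']

lemma alph_smul_add_smul (hA : A.PosDef) {u v : Fin n → ℝ} (hu : alph A u = 1) (hv : alph A v = 1)
    (huv : u ⬝ᵥ A *ᵥ v = 0) {p q : ℝ} (hpq : p ^ 2 + q ^ 2 = 1) :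
    alph A (p • u + q • v) = 1 := by
  have hvu : v ⬝ᵥ A *ᵥ u = 0 := by
    rw [dotProduct_mulVec_of_isSymm (posDef_isSymm hA), dotProduct_comm, huv]
  have huu := alph_sq hA u
  have hvv := alph_sq hA v
  rw [alph_eq_sqrt, Real.sqrt_eq_one]
  simp only [Matrix.mulVec_add, Matrix.mulVec_smul, add_dotProduct, dotProduct_add,
    smul_dotProduct, dotProduct_smul, smul_eq_mul, huv, hvu, ← huu, ← hvv, hu, hv]
  linear_combination hpq

lemma dotProduct_eq_zero_of_orthonormal (hA : A.PosDef) {k : ℕ} {f : (Fin n → ℝ) → ℝ}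
    (hf : f ∈ mvPolyFun n)
    (h : ∀ y ≠ 0, Real.cosh (sVar A b y) * (c ⬝ᵥ y) * alph A y ^ k = f y) {u v : Fin n → ℝ}
    (hu : alph A u = 1) (hv : alph A v = 1) (huv : u ⬝ᵥ A *ᵥ v = 0) (hbu : 0 < b ⬝ᵥ u)
    (hbv : b ⬝ᵥ v = 0) : c ⬝ᵥ v = 0 := by
  obtain ⟨P, Q, hPQ⟩ := exists_polynomial_on_circle hf u v
  refine eq_zero_of_cosh_mul_eq_on_circle (P := P) (Q := Q) (c := c ⬝ᵥ u) hbu fun p q hpq => ?_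
  have hα := alph_smul_add_smul hA hu hv huv hpq
  have hy : p • u + q • v ≠ 0 := fun h0 => by simp [h0, alph_eq_sqrt] at hα
  have hs : sVar A b (p • u + q • v) = b ⬝ᵥ u * p := by
    change b ⬝ᵥ (p • u + q • v) / _ = _
    rw [hα, dotProduct_add, dotProduct_smul, dotProduct_smul, hbv, smul_zero, add_zero, div_one,
      smul_eq_mul, mul_comm]
  rw [← hPQ p q hpq, ← h _ hy, hs, hα, dotProduct_add, dotProduct_smul, dotProduct_smul, one_pow,
    mul_one, smul_eq_mul, smul_eq_mul]

lemma dotProduct_eq_zero_of_cosh_mul_mem_mvPolyFun (hA : A.PosDef) (hb : b ≠ 0) {k : ℕ}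
    {f : (Fin n → ℝ) → ℝ} (hf : f ∈ mvPolyFun n)
    (h : ∀ y ≠ 0, Real.cosh (sVar A b y) * (c ⬝ᵥ y) * alph A y ^ k = f y)
    {w : Fin n → ℝ} (hw : b ⬝ᵥ w = 0) : c ⬝ᵥ w = 0 := by
  rcases eq_or_ne w 0 with rfl | hw0
  · exact dotProduct_zero c
  have hAu := mulVec_inv_mulVec hA b
  have hu0 : A⁻¹ *ᵥ b ≠ 0 := fun h0 => hb (by rw [← hAu, h0, Matrix.mulVec_zero])
  have hbu : b ⬝ᵥ A⁻¹ *ᵥ b = alph A (A⁻¹ *ᵥ b) ^ 2 := by rw [alph_sq hA, hAu, dotProduct_comm]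
  have hαu := alph_pos hA hu0
  have hαw := alph_pos hA hw0
  have hcw := dotProduct_eq_zero_of_orthonormal hA hf h (alph_smul_inv_alph hA hu0)
    (alph_smul_inv_alph hA hw0)
    (by rw [dotProduct_mulVec_of_isSymm (posDef_isSymm hA), Matrix.mulVec_smul, hAu,
          smul_dotProduct, dotProduct_smul, hw, smul_zero, smul_zero])
    (by rw [dotProduct_smul, hbu, smul_eq_mul]; positivity)
    (by rw [dotProduct_smul, hw, smul_zero])
  simpa [dotProduct_smul, hαw.ne'] using hcw

end Transcendence

section Rigidity

variable {n : ℕ} {A R S T : Matrix (Fin n) (Fin n) ℝ} {b : Fin n → ℝ}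
  {W : (Fin n → ℝ) → Fin n → ℝ} {y : Fin n → ℝ}

lemma eq_zero_of_transpose_eq_neg (hS : Sᵀ = -S) (hb : b ≠ 0)
    (h : ∀ w, b ⬝ᵥ w = 0 → S *ᵥ w = 0) : S = 0 := by
  obtain ⟨k, hk⟩ := Function.ne_iff.1 hb
  have hskew (i j : Fin n) : S j i = -S i j := congrFun (congrFun hS i) j
  have hcol (l i : Fin n) : b k * S l i = b i * S l k := by
    have hker : b ⬝ᵥ (b k • Pi.single i 1 - b i • Pi.single k 1) = 0 := by
      simp [dotProduct_sub, mul_comm]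
    have hl := congrFun (h _ hker) l
    simp only [Matrix.mulVec_sub, Matrix.mulVec_smul, Matrix.mulVec_single_one, Pi.sub_apply,
      Pi.smul_apply, Matrix.col_apply, smul_eq_mul, Pi.zero_apply] at hl
    linarith
  have hkcol (l : Fin n) : S l k = 0 := by
    have hkk : S k k = 0 := by linarith [hskew k k]
    have hkl := hcol k l
    rw [hkk, mul_zero, hskew] at hkl
    simpa using (mul_eq_zero.1 hkl).resolve_left hk
  ext l i
  simpa [hkcol l] using (mul_eq_zero.1 ((hcol l i).trans (by rw [hkcol, mul_zero]))).resolve_left hk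

lemma eq_zero_of_isSymm_of_quadratic_eq_zero (hR : R.IsSymm) (h : ∀ y, y ⬝ᵥ R *ᵥ y = 0) :
    R = 0 := by
  have hzero : Matrix.toBilin' R = 0 :=
    LinearMap.BilinForm.ext_of_isSymm ⟨(toBilin'_isSymm hR).eq⟩ ⟨fun _ _ => by simp⟩ fun y => by
      simpa [Matrix.toBilin'_apply'] using h y
  simpa using hzero

/-- `W` is an even polynomial solution of the equation satisfied by the component orthogonal to
`y` of the difference of the sprays of `α e^{β/α} + γ` and `α` at a point. Here `R` and `S` stand
for the symmetric and skew parts of the covariant derivative of `β`, and `T` for the skew part of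
that of `γ`; the common factor `e^{β/α}` is divided out. -/
structure IsDouglasSolution (A R S T : Matrix (Fin n) (Fin n) ℝ) (b : Fin n → ℝ)
    (W : (Fin n → ℝ) → Fin n → ℝ) : Prop where
  mem_mvPolyFun (i : Fin n) : (W · i) ∈ mvPolyFun n
  even (y : Fin n → ℝ) : W (-y) = W y
  eq {y : Fin n → ℝ} (hy : y ≠ 0) (l : Fin n) :
    2 * (hl A b y l * (b ⬝ᵥ W y) + (1 - sVar A b y) * (A *ᵥ W y) l) =
      hl A b y l * alph A y ^ 2 * (y ⬝ᵥ R *ᵥ y)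
        + 2 * alph A y ^ 3 * ((S *ᵥ y) l + Real.exp (-sVar A b y) * (T *ᵥ y) l)

namespace IsDouglasSolution

lemma odd_part (hA : A.PosDef) (h : IsDouglasSolution A R S T b W) (hy : y ≠ 0) (l : Fin n) :
    -(sVar A b y * (A *ᵥ W y) l) =
      alph A y ^ 3 * ((S *ᵥ y) l + Real.cosh (sVar A b y) * (T *ᵥ y) l) := by
  have hα : alph A (-y) = alph A y := by simp [alph_eq_sqrt, Matrix.mulVec_neg]
  have hs : sVar A b (-y) = -sVar A b y := by simp [sVar, oneForm, hα, neg_div]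
  have hh : hl A b (-y) l = hl A b y l := by
    simp [hl_eq hA hy, hl_eq hA (neg_ne_zero.2 hy), hs, hα, Matrix.mulVec_neg, neg_div]
  have hpos := h.eq hy l
  have hneg := h.eq (neg_ne_zero.2 hy) l
  simp only [h.even, hα, hs, hh, Matrix.mulVec_neg, neg_dotProduct, dotProduct_neg, neg_neg,
    Pi.neg_apply] at hneg
  rw [Real.cosh_eq]
  linear_combination (hpos - hneg) / 4

lemma cosh_mul_eq (hA : A.PosDef) (h : IsDouglasSolution A R S T b W) (hy : y ≠ 0) (l : Fin n) :
    Real.cosh (sVar A b y) * (T *ᵥ y) l * alph A y ^ 4 =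
      -((b ⬝ᵥ y) * (A *ᵥ W y) l) - (y ⬝ᵥ A *ᵥ y) ^ 2 * (S *ᵥ y) l := by
  have hs : sVar A b y * alph A y = b ⬝ᵥ y := div_mul_cancel₀ _ (alph_pos hA hy).ne'
  rw [← alph_sq hA, ← hs]
  linear_combination (-alph A y) * h.odd_part hA hy l

lemma T_eq_zero (hA : A.PosDef) (hT : Tᵀ = -T) (hb : b ≠ 0)
    (h : IsDouglasSolution A R S T b W) : T = 0 := by
  refine eq_zero_of_transpose_eq_neg hT hb fun w hw => funext fun l => ?_
  exact dotProduct_eq_zero_of_cosh_mul_mem_mvPolyFun hA hb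
    (sub_mem (neg_mem (mul_mem (linear_mem_mvPolyFun b) (mulVec_mem_mvPolyFun A h.mem_mvPolyFun l)))
      (mul_mem (pow_mem (quadratic_mem_mvPolyFun A) 2)
        (mulVec_mem_mvPolyFun S apply_mem_mvPolyFun l)))
    (fun y hy => h.cosh_mul_eq hA hy l) hw

lemma S_eq_zero (hA : A.PosDef) (hS : Sᵀ = -S) (hb : b ≠ 0)
    (h : IsDouglasSolution A R S 0 b W) : S = 0 := by
  refine eq_zero_of_transpose_eq_neg hS hb fun w hw => ?_
  rcases eq_or_ne w 0 with rfl | hw0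
  · exact Matrix.mulVec_zero S
  · have hα := alph_pos hA hw0
    have hs : sVar A b w = 0 := by
      change b ⬝ᵥ w / _ = 0
      rw [hw, zero_div]
    ext l
    simpa [hs, hα.ne'] using h.odd_part hA hw0 l

lemma linear_mul_linear_mul_quadratic_eq_zero (hA : A.PosDef) (h : IsDouglasSolution A R 0 0 b W)
    {w : Fin n → ℝ} (hw : b ⬝ᵥ w = 0) (y : Fin n → ℝ) :
    ((b ⬝ᵥ y) * ((A *ᵥ w) ⬝ᵥ y)) * (y ⬝ᵥ R *ᵥ y) = 0 := by
  rcases eq_or_ne y 0 with rfl | hy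
  · simp
  rcases eq_or_ne (b ⬝ᵥ y) 0 with hβ | hβ
  · rw [hβ, zero_mul, zero_mul]
  have hα := alph_pos hA hy
  have hs : sVar A b y ≠ 0 := div_ne_zero hβ hα.ne'
  have hAW : A *ᵥ W y = 0 := by
    ext l
    simpa [hs] using h.odd_part hA hy l
  have hW : W y = 0 := Matrix.eq_zero_of_mulVec_eq_zero hA.det_pos.ne' hAW
  have hhl (l : Fin n) : hl A b y l * (y ⬝ᵥ R *ᵥ y) = 0 := by
    simpa [hW, hα.ne', mul_right_comm] using h.eq hy l
  have hhw : hl A b y ⬝ᵥ w = -(sVar A b y / alph A y * ((A *ᵥ w) ⬝ᵥ y)) := by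
    rw [hl_eq hA hy, sub_dotProduct, hw, smul_dotProduct, zero_sub, smul_eq_mul,
      ← dotProduct_mulVec_of_isSymm (posDef_isSymm hA), dotProduct_comm y]
  have hcontract : hl A b y ⬝ᵥ w * (y ⬝ᵥ R *ᵥ y) = 0 := by
    rw [dotProduct, Finset.sum_mul]
    exact Finset.sum_eq_zero fun l _ => by rw [mul_right_comm, hhl, zero_mul]
  rw [hhw, neg_mul, neg_eq_zero, mul_assoc, mul_eq_zero] at hcontract
  rw [mul_assoc, hcontract.resolve_left (div_ne_zero hs hα.ne'), mul_zero]

lemma R_eq_zero (hn : 2 ≤ n) (hA : A.PosDef) (hR : R.IsSymm) (hb : b ≠ 0)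
    (h : IsDouglasSolution A R 0 0 b W) : R = 0 := by
  have : Nontrivial (Fin n) := Fin.nontrivial_iff_two_le.2 hn
  obtain ⟨w, hw0, hw⟩ := exists_ne_zero_dotProduct_eq_zero b
  rw [dotProduct_comm] at hw
  have hAw : A *ᵥ w ≠ 0 := fun h0 => hw0 (Matrix.eq_zero_of_mulVec_eq_zero hA.det_pos.ne' h0)
  have hne {c : Fin n → ℝ} (hc : c ≠ 0) : (fun y => c ⬝ᵥ y) ≠ 0 := fun h0 =>
    hc (dotProduct_eq_zero c (congrFun h0))
  rcases eq_zero_or_eq_zero_of_mem_mvPolyFun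
    (mul_mem (linear_mem_mvPolyFun b) (linear_mem_mvPolyFun (A *ᵥ w)))
    (quadratic_mem_mvPolyFun R) (h.linear_mul_linear_mul_quadratic_eq_zero hA hw) with h0 | h0
  · rcases eq_zero_or_eq_zero_of_mem_mvPolyFun (linear_mem_mvPolyFun b)
      (linear_mem_mvPolyFun (A *ᵥ w)) (congrFun h0) with h1 | h1
    exacts [absurd h1 (hne hb), absurd h1 (hne hAw)]
  · exact eq_zero_of_isSymm_of_quadratic_eq_zero hR (congrFun h0)

lemma eq_zero (hn : 2 ≤ n) (hA : A.PosDef) (hR : R.IsSymm) (hS : Sᵀ = -S) (hT : Tᵀ = -T)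
    (hb : b ≠ 0) (h : IsDouglasSolution A R S T b W) : R = 0 ∧ S = 0 ∧ T = 0 := by
  obtain rfl := h.T_eq_zero hA hT hb
  obtain rfl := h.S_eq_zero hA hS hb
  exact ⟨h.R_eq_zero hn hA hR hb, rfl, rfl⟩

end IsDouglasSolution

end Rigidity

section Douglas

variable {n : ℕ} {U : Set (Fin n → ℝ)} {a : (Fin n → ℝ) → Matrix (Fin n) (Fin n) ℝ}
  {b g : (Fin n → ℝ) → Fin n → ℝ} {F : (Fin n → ℝ) → (Fin n → ℝ) → ℝ} {x : Fin n → ℝ}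

lemma eval_smul_of_isHomogeneous {σ R : Type*} [CommSemiring R] {P : MvPolynomial σ R} {k : ℕ}
    (hP : P.IsHomogeneous k) (t : R) (y : σ → R) :
    MvPolynomial.eval (t • y) P = t ^ k * MvPolynomial.eval y P := by
  simp only [MvPolynomial.eval_eq, Finset.mul_sum]
  refine Finset.sum_congr rfl fun d hd => ?_
  have hdeg : ∑ i ∈ d.support, d i = k := by
    change d.degree = k
    rw [Finsupp.degree_eq_weight_one]
    exact hP (MvPolynomial.mem_support_iff.1 hd)
  simp only [Pi.smul_apply, smul_eq_mul, mul_pow, Finset.prod_mul_distrib,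
    Finset.prod_pow_eq_pow_sum, hdeg]
  ring

/-- The condition on `F` at the point `x` defining Douglas spaces. -/
def IsDouglasAt (F : (Fin n → ℝ) → (Fin n → ℝ) → ℝ) (x : Fin n → ℝ) : Prop :=
  ∀ i j : Fin n, ∃ P : MvPolynomial (Fin n) ℝ, P.IsHomogeneous 3 ∧
    ∀ y : Fin n → ℝ, y ≠ 0 → sprayF F x y i * y j - sprayF F x y j * y i = MvPolynomial.eval y P

lemma alphaG_eq (a : (Fin n → ℝ) → Matrix (Fin n) (Fin n) ℝ) (x y : Fin n → ℝ) (i : Fin n) :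
    alphaG a x y i = 1 / 2 * (y ⬝ᵥ Matrix.of (chr a x i) *ᵥ y) := by
  simp only [alphaG, dotProduct, Matrix.mulVec, Matrix.of_apply, Finset.mul_sum]
  exact Finset.sum_congr rfl fun j _ => Finset.sum_congr rfl fun k _ => by ring

lemma orthoPart_apply_eq_sum (A : Matrix (Fin n) (Fin n) ℝ) (y v : Fin n → ℝ) (l : Fin n) :
    orthoPart A y v l = ∑ j, (v l * y j - v j * y l) * (A *ᵥ y) j := by
  simp only [orthoPart, Pi.sub_apply, Pi.smul_apply, smul_eq_mul, dotProduct, Finset.sum_mul,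
    ← Finset.sum_sub_distrib]
  exact Finset.sum_congr rfl fun j _ => by ring

lemma IsDouglasAt.exists_orthoPart_sprayF_sub_eq (hF : IsDouglasAt F x)
    (a : (Fin n → ℝ) → Matrix (Fin n) (Fin n) ℝ) :
    ∃ W : (Fin n → ℝ) → Fin n → ℝ, (∀ i, (W · i) ∈ mvPolyFun n) ∧ (∀ y, W (-y) = W y) ∧
      ∀ y ≠ 0, W y = orthoPart (a x) y (sprayF F x y - alphaG a x y) := by
  choose P hP hPeq using hF
  refine ⟨fun y l => ∑ j, (MvPolynomial.eval y (P l j)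
    - (alphaG a x y l * y j - alphaG a x y j * y l)) * (a x *ᵥ y) j, fun l => ?_, fun y => ?_,
    fun y hy => ?_⟩
  · have hG (i : Fin n) : (alphaG a x · i) ∈ mvPolyFun n := by
      simp only [alphaG_eq]
      exact mul_mem (const_mem_mvPolyFun _) (quadratic_mem_mvPolyFun _)
    exact sum_mul_mem_mvPolyFun (fun j => sub_mem (eval_mem_mvPolyFun _)
      (sub_mem (mul_mem (hG l) (apply_mem_mvPolyFun j)) (mul_mem (hG j) (apply_mem_mvPolyFun l))))
      (mulVec_mem_mvPolyFun (a x) apply_mem_mvPolyFun)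
  · have hodd (i j : Fin n) : MvPolynomial.eval (-y) (P i j) = -MvPolynomial.eval y (P i j) := by
      rw [← neg_one_smul ℝ y, eval_smul_of_isHomogeneous (hP i j)]
      ring
    ext l
    refine Finset.sum_congr rfl fun j _ => ?_
    simp only [hodd, alphaG_eq, Matrix.mulVec_neg, neg_dotProduct, dotProduct_neg, Pi.neg_apply]
    ring
  · ext l
    rw [orthoPart_apply_eq_sum]
    refine Finset.sum_congr rfl fun j _ => ?_
    rw [← hPeq l j y hy, Pi.sub_apply, Pi.sub_apply]
    ring

lemma transpose_of_sSym (a : (Fin n → ℝ) → Matrix (Fin n) (Fin n) ℝ)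
    (b : (Fin n → ℝ) → Fin n → ℝ) (x : Fin n → ℝ) :
    (Matrix.of (sSym a b x))ᵀ = -Matrix.of (sSym a b x) := by
  ext i j
  simp only [sSym, Matrix.transpose_apply, Matrix.of_apply, Matrix.neg_apply]
  ring

lemma isSymm_of_rSym (a : (Fin n → ℝ) → Matrix (Fin n) (Fin n) ℝ)
    (b : (Fin n → ℝ) → Fin n → ℝ) (x : Fin n → ℝ) : (Matrix.of (rSym a b x)).IsSymm := by
  ext i j
  simp only [rSym, Matrix.transpose_apply, Matrix.of_apply, add_comm]

lemma covD_eq_rSym_add_sSym (a : (Fin n → ℝ) → Matrix (Fin n) (Fin n) ℝ)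
    (b : (Fin n → ℝ) → Fin n → ℝ) (x : Fin n → ℝ) (i j : Fin n) :
    covD a b x i j = rSym a b x i j + sSym a b x i j := by
  rw [rSym, sSym]
  ring

lemma r00_eq (a : (Fin n → ℝ) → Matrix (Fin n) (Fin n) ℝ) (b : (Fin n → ℝ) → Fin n → ℝ)
    (x y : Fin n → ℝ) : r00 a b x y = y ⬝ᵥ Matrix.of (rSym a b x) *ᵥ y := by
  simp only [r00, dotProduct, Matrix.mulVec, Matrix.of_apply, Finset.mul_sum]
  exact Finset.sum_congr rfl fun i _ => Finset.sum_congr rfl fun j _ => by ring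

lemma IsRiemannianMetric.exists_isDouglasSolution (ha : IsRiemannianMetric U a) (hU : IsOpen U)
    (hb : ∀ i, ContDiffOn ℝ ∞ (fun x => b x i) U) (hg : ∀ i, ContDiffOn ℝ ∞ (fun x => g x i) U)
    (hF : IsFinslerMetric U (abgMetric Real.exp a b g)) (hx : x ∈ U)
    (hD : IsDouglasAt (abgMetric Real.exp a b g) x) :
    ∃ W, IsDouglasSolution (a x) (Matrix.of (rSym a b x)) (Matrix.of (sSym a b x))
      (Matrix.of (sSym a g x)) (b x) W := by
  obtain ⟨W, hpoly, heven, hW⟩ := hD.exists_orthoPart_sprayF_sub_eq a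
  refine ⟨W, hpoly, heven, fun {y} hy l => ?_⟩
  have hkey := ha.orthoPart_sprayF_sub hU hb hg Real.contDiff_exp hF hx hy (hW y hy) l
  have hexp : Real.exp (sVar (a x) (b x) y) * Real.exp (-sVar (a x) (b x) y) = 1 := by
    rw [← Real.exp_add, add_neg_cancel, Real.exp_zero]
  rw [Real.deriv_exp, Real.deriv_exp, tangentIntercept_exp, r00_eq] at hkey
  refine mul_left_cancel₀ (Real.exp_ne_zero (sVar (a x) (b x) y)) ?_
  change _ = _ * (_ + 2 * _ * (s0low a b x y l + _ * s0low a g x y l))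
  linear_combination hkey - 2 * alph (a x) y ^ 3 * s0low a g x y l * hexp

end Douglas

/-- if `F = α e^{β/α} + γ` is of Douglas type then `β` is parallel and `γ` is closed. -/
theorem statement18
    (n : ℕ) (hn : 2 ≤ n)
    (U : Set (Fin n → ℝ)) (hU : IsOpen U)
    (a : (Fin n → ℝ) → Matrix (Fin n) (Fin n) ℝ)
    (haS : ∀ i j, ContDiffOn ℝ (⊤ : ℕ∞) (fun x => a x i j) U)
    (haP : ∀ x ∈ U, (a x).PosDef)
    (bv gv : (Fin n → ℝ) → Fin n → ℝ)
    (hbS : ∀ i, ContDiffOn ℝ (⊤ : ℕ∞) (fun x => bv x i) U)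
    (hgS : ∀ i, ContDiffOn ℝ (⊤ : ℕ∞) (fun x => gv x i) U)
    (hb1 : ∀ x ∈ U, Real.sqrt (quadInv (a x) (bv x) (bv x)) < 1)
    (hg1 : ∀ x ∈ U, Real.sqrt (quadInv (a x) (gv x) (gv x)) < Real.exp (-1))
    (hbne : ∀ x ∈ U, bv x ≠ 0)
    (hD : ∀ x ∈ U, ∀ i j : Fin n,
      ∃ P : MvPolynomial (Fin n) ℝ, P.IsHomogeneous 3 ∧
        ∀ y : Fin n → ℝ, y ≠ 0 →
          sprayF (fun z w => alph (a z) w * Real.exp (oneForm (bv z) w / alph (a z) w)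
              + oneForm (gv z) w) x y i * y j
            - sprayF (fun z w => alph (a z) w * Real.exp (oneForm (bv z) w / alph (a z) w)
              + oneForm (gv z) w) x y j * y i = MvPolynomial.eval y P) :
    ∀ x ∈ U, ∀ i j : Fin n, covD a bv x i j = 0 ∧ sSym a gv x i j = 0 := by
  intro x hx i j
  have ha : IsRiemannianMetric U a := ⟨haS, haP⟩
  have hF := ha.isFinslerMetric_abgMetric_exp hU hbS hgS hb1 hg1
  obtain ⟨W, hW⟩ := ha.exists_isDouglasSolution hU hbS hgS hF hx (hD x hx)
  obtain ⟨hR, hS, hT⟩ := hW.eq_zero hn (haP x hx) (isSymm_of_rSym a bv x)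
    (transpose_of_sSym a bv x) (transpose_of_sSym a gv x) (hbne x hx)
  have hr : rSym a bv x i j = 0 := congrFun₂ hR i j
  have hs : sSym a bv x i j = 0 := congrFun₂ hS i j
  exact ⟨by rw [covD_eq_rSym_add_sSym, hr, hs, add_zero], congrFun₂ hT i j⟩
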